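/- Let q be a prime power and n a positive integer. Suppose the radical of q^n − 1 (the product of its distinct prime factors) factors as k·P·L, where k, P, L are pairwise coprime, P = p_1⋯p_s is a product of s distinct primes and L = l_1⋯l_t is a product of t distinct primes. Set δ = 1 − Σ_{i=1}^{s} 1/p_i, ε = Σ_{i=1}^{t} 1/l_i, and θ(k) = φ(k)/k. Suppose θ(k)·δ > ε and q^{n/2 − 2} > 4·(θ(k)·(s − 1 + 2δ)·2^{ω(k)} + (t − ε)) / (θ(k)·δ − ε). Then for every a, b in F_q there exists a nonzero element ξ in F_{q^n} such that Tr(ξ) = a, Tr(ξ^{-1}) = b, and ξ + ξ^{-1} is a primitive element of F_{q^n}. -/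

import Mathlib

open Polynomial

/-- weight of the monomial x^k y^i z^j -/
def stWt (d : ℕ) (t : ℕ × ℕ × ℕ) : ℕ :=
  t.1 * (d * (d + 1)) + t.2.1 * (d + 1) ^ 2 + t.2.2 * (d * (d + 2))

def stRed (d : ℕ) (t : ℕ × ℕ × ℕ) : Prop := t.2.1 < d ∧ t.2.2 ≤ d

structure StPt {K : Type*} (L : Type*) [Field K] [Field L] [Algebra K L] (d : ℕ) (u v : K) where
  x : L
  y : L
  z : L
  hy : y ^ d = x ^ (d + 1) + x ^ (d - 1)
  hz : z ^ (d + 1) = algebraMap K L u * x ^ (d + 2) + x ^ d * z + algebraMap K L v * x ^ d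

lemma stWt_inj (d : ℕ) (s t : ℕ × ℕ × ℕ) (hs : stRed d s) (ht : stRed d t)
    (h : stWt d s = stWt d t) : s = t := by
  obtain ⟨k, i, j⟩ := s
  obtain ⟨k', i', j'⟩ := t
  simp only [stRed, stWt] at *
  have hd : 0 < d := by omega
  have h1 : j = j' := by
    have : (d + 1 : ℤ) ∣ (j : ℤ) - j' := by
      have h' : (k * (d * (d + 1)) + i * (d + 1) ^ 2 + j * (d * (d + 2)) : ℤ) =
        k' * (d * (d + 1)) + i' * (d + 1) ^ 2 + j' * (d * (d + 2)) := by exact_mod_cast h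
      refine ⟨(k - k') * d + (i - i') * (d + 1) + (j - j') * (d + 1), ?_⟩
      linear_combination -h'
    obtain ⟨c, hc⟩ := this
    have hc0 : c = 0 := by
      by_contra hne
      rcases lt_or_gt_of_ne hne with hh | hh
      · nlinarith
      · nlinarith
    subst hc0
    omega
  subst h1
  have h2 : i = i' := by
    have : (d : ℤ) ∣ (i : ℤ) - i' := by
      have h' : (k * (d * (d + 1)) + i * (d + 1) ^ 2 + j * (d * (d + 2)) : ℤ) =
        k' * (d * (d + 1)) + i' * (d + 1) ^ 2 + j * (d * (d + 2)) := by exact_mod_cast h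
      refine ⟨-(k - k') * (d + 1) - (i - i') * (d + 2), ?_⟩
      linear_combination h'
    obtain ⟨c, hc⟩ := this
    have hc0 : c = 0 := by
      by_contra hne
      rcases lt_or_gt_of_ne hne with hh | hh
      · nlinarith
      · nlinarith
    subst hc0
    omega
  subst h2
  have h3 : k = k' := by
    have : k * (d * (d + 1)) = k' * (d * (d + 1)) := by omega
    exact Nat.eq_of_mul_eq_mul_right (by positivity) this
  subst h3
  rfl

lemma stWt_surj (d : ℕ) (hd : 0 < d) (w : ℕ) (hw : 2 * (d + 1) ^ 3 ≤ w) :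
    ∃ t, stRed d t ∧ stWt d t = w := by
  set i := w % d with hi
  obtain ⟨j, hj, hjw⟩ : ∃ j, j ≤ d ∧ (d + 1) ∣ w + j := by
    refine ⟨(d * w) % (d + 1), Nat.lt_succ_iff.mp (Nat.mod_lt _ (Nat.succ_pos d)), ?_⟩
    rw [Nat.dvd_iff_mod_eq_zero, Nat.add_mod_mod, ← Nat.dvd_iff_mod_eq_zero]
    exact ⟨w, by ring⟩
  have hid : i < d := Nat.mod_lt _ hd
  have hle : i * (d + 1) ^ 2 + j * (d * (d + 2)) ≤ w := by
    refine le_trans ?_ hw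
    have h1 : i * (d + 1) ^ 2 ≤ (d + 1) * (d + 1) ^ 2 := Nat.mul_le_mul_right _ (by omega)
    have h2 : j * (d * (d + 2)) ≤ (d + 1) * (d + 1) ^ 2 := Nat.mul_le_mul (by omega) (by nlinarith)
    nlinarith
  obtain ⟨m, hm⟩ : ∃ m, w = i * (d + 1) ^ 2 + j * (d * (d + 2)) + m := Nat.exists_eq_add_of_le hle
  have hdiv : d * (d + 1) ∣ m := by
    refine Nat.Coprime.mul_dvd_of_dvd_of_dvd (by simp) ?_ ?_
    · have h1 : (d : ℤ) ∣ (w : ℤ) - i := by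
        have := Nat.mod_add_div w d
        refine ⟨(w / d : ℕ), ?_⟩
        zify at this
        rw [← this, hi]; push_cast; ring
      obtain ⟨c, hc⟩ := h1
      have : (d : ℤ) ∣ (m : ℤ) := by
        refine ⟨c - i * (d + 2) - j * (d + 2), ?_⟩
        have hm' : (w : ℤ) = i * (d + 1) ^ 2 + j * (d * (d + 2)) + m := by exact_mod_cast hm
        linear_combination hc - hm'
      exact_mod_cast this
    · obtain ⟨c, hc⟩ := hjw
      have : ((d + 1 : ℕ) : ℤ) ∣ (m : ℤ) := by
        refine ⟨c - i * (d + 1) - j * (d + 1), ?_⟩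
        have hm' : (w : ℤ) = i * (d + 1) ^ 2 + j * (d * (d + 2)) + m := by exact_mod_cast hm
        have hc' : (w : ℤ) + j = (d + 1) * c := by exact_mod_cast hc
        push_cast
        linear_combination hc' - hm'
      exact_mod_cast this
  obtain ⟨k, hk⟩ := hdiv
  refine ⟨(k, i, j), ⟨hid, hj⟩, ?_⟩
  simp only [stWt]
  rw [hm, hk]; ring

section St
variable {K : Type*} (L : Type*) [Field K] [Field L] [Algebra K L] (d : ℕ) (u v : K)

def stMon (t : ℕ × ℕ × ℕ) : StPt L d u v → L := fun p => p.x ^ t.1 * p.y ^ t.2.1 * p.z ^ t.2.2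

/-- span of all monomials of weight at most w -/
def stV (w : ℕ) : Submodule K (StPt L d u v → L) :=
  Submodule.span K (Set.image (stMon L d u v) {t | stWt d t ≤ w})

/-- span of reduced monomials of weight less than w -/
def stR (w : ℕ) : Submodule K (StPt L d u v → L) :=
  Submodule.span K (Set.image (stMon L d u v) {t | stRed d t ∧ stWt d t < w})

variable {L d u v}

lemma stM_mul (s t : ℕ × ℕ × ℕ) : stMon L d u v s * stMon L d u v t = stMon L d u v (s + t) := by
  funext p
  simp only [stMon, Pi.mul_apply, Prod.fst_add, Prod.snd_add]
  ring

lemma stWt_add (s t : ℕ × ℕ × ℕ) : stWt d (s + t) = stWt d s + stWt d t := by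
  simp only [stWt, Prod.fst_add, Prod.snd_add]
  ring

lemma stV_mul {a b : ℕ} {f g : StPt L d u v → L} (hf : f ∈ stV L d u v a) (hg : g ∈ stV L d u v b) :
    f * g ∈ stV L d u v (a + b) := by
  have : stV L d u v a * stV L d u v b ≤ stV L d u v (a + b) := by
    rw [stV, stV, Submodule.span_mul_span, Submodule.span_le]
    rintro _ ⟨_, ⟨s, hs, rfl⟩, _, ⟨t, ht, rfl⟩, rfl⟩
    simp only [stM_mul]
    refine Submodule.subset_span ⟨s + t, ?_, rfl⟩
    simp only [Set.mem_ofPred_eq, stWt_add] at *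
    omega
  exact this (Submodule.mul_mem_mul hf hg)

lemma stV_mono {a b : ℕ} (h : a ≤ b) : stV L d u v a ≤ stV L d u v b :=
  Submodule.span_mono (Set.image_mono fun _ ht => le_trans ht h)

lemma stR_mono {a b : ℕ} (h : a ≤ b) : stR L d u v a ≤ stR L d u v b :=
  Submodule.span_mono (Set.image_mono fun _ ht => ⟨ht.1, lt_of_lt_of_le ht.2 h⟩)

lemma stV_pow {a : ℕ} {f : StPt L d u v → L} (hf : f ∈ stV L d u v a) (n : ℕ) :
    f ^ n ∈ stV L d u v (n * a) := by
  induction n with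
  | zero =>
    refine Submodule.subset_span ⟨(0, 0, 0), by simp [stWt], ?_⟩
    funext p; simp [stMon]
  | succ n ih =>
    rw [pow_succ, Nat.succ_mul]
    exact stV_mul ih hf

/-- reduction of monomials -/
lemma stM_reduce (hd : 0 < d) (hu : u ≠ 0) : ∀ w n : ℕ, ∀ t : ℕ × ℕ × ℕ, stWt d t = w → t.2.1 + t.2.2 = n →
    ∃ s, stRed d s ∧ stWt d s = w ∧ ∃ α : K, α ≠ 0 ∧
      stMon L d u v t - α • stMon L d u v s ∈ stR L d u v w := by
  intro w
  induction w using Nat.strong_induction_on with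
  | _ w ihw =>
  intro n
  induction n using Nat.strong_induction_on with
  | _ n ihn =>
  -- lower weight monomials are in stR
  have low : ∀ t, stWt d t < w → stMon L d u v t ∈ stR L d u v w := by
    intro t ht
    obtain ⟨s, hs, hsw, α, -, hα⟩ := ihw _ ht _ t rfl rfl
    have h1 := stR_mono ht.le hα
    have h2 : stMon L d u v s ∈ stR L d u v w :=
      Submodule.subset_span ⟨s, ⟨hs, by omega⟩, rfl⟩
    have := Submodule.add_mem _ h1 (Submodule.smul_mem _ α h2)
    simpa using this
  rintro ⟨a, b, c⟩ ht hn
  simp only at hn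
  by_cases hb : d ≤ b
  · obtain ⟨b, rfl⟩ := Nat.exists_eq_add_of_le hb
    have e : stMon L d u v (a, d + b, c) = stMon L d u v (a + d + 1, b, c) + stMon L d u v (a + (d - 1), b, c) := by
      funext p
      simp only [stMon, Pi.add_apply]
      have := p.hy
      rw [pow_add p.y, this]
      ring
    have w1 : stWt d (a + d + 1, b, c) = w := by
      rw [← ht]; simp only [stWt]; ring
    have w2 : stWt d (a + (d - 1), b, c) < w := by
      rw [← w1]; simp only [stWt]
      have : 0 < d * (d+1) := by positivity
      have : (a + (d-1)) * (d * (d+1)) < (a + d + 1) * (d * (d + 1)) :=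
        Nat.mul_lt_mul_of_pos_right (by omega) this
      omega
    obtain ⟨s, hs, hsw, α, hα0, hα⟩ := ihn (b + c) (by omega) _ w1 rfl
    refine ⟨s, hs, hsw, α, hα0, ?_⟩
    rw [e, add_sub_right_comm]
    exact Submodule.add_mem _ hα (low _ w2)
  by_cases hc : d < c
  · obtain ⟨c, rfl⟩ := Nat.exists_eq_add_of_le (Nat.succ_le_of_lt hc)
    have e : stMon L d u v (a, b, d.succ + c) = u • stMon L d u v (a + d + 2, b, c) +
        (stMon L d u v (a + d, b, c + 1) + v • stMon L d u v (a + d, b, c)) := by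
      funext p
      simp only [Pi.add_apply, Pi.smul_apply, stMon]
      simp only [Algebra.smul_def]
      have := p.hz
      rw [pow_add p.z, Nat.succ_eq_add_one, this]
      ring
    have w1 : stWt d (a + d + 2, b, c) = w := by
      rw [← ht]; simp only [stWt, Nat.succ_eq_add_one]; ring
    have w2 : stWt d (a + d, b, c + 1) < w := by
      rw [← w1]; simp only [stWt]
      nlinarith
    have w3 : stWt d (a + d, b, c) < w := by
      rw [← w1]; simp only [stWt]
      nlinarith
    obtain ⟨s, hs, hsw, α, hα0, hα⟩ := ihn (b + c) (by omega) _ w1 rfl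
    refine ⟨s, hs, hsw, u * α, mul_ne_zero hu hα0, ?_⟩
    rw [e, add_sub_right_comm, mul_smul, ← smul_sub]
    refine Submodule.add_mem _ (Submodule.smul_mem _ _ hα) (Submodule.add_mem _ (low _ w2) (Submodule.smul_mem _ _ (low _ w3)))
  · refine ⟨(a, b, c), ⟨by simpa using hb, by simpa using hc⟩, ht, 1, one_ne_zero, ?_⟩
    simp

lemma stV_le_stR (hd : 0 < d) (hu : u ≠ 0) (w : ℕ) : stV L d u v w ≤ stR L d u v (w + 1) := by
  rw [stV, Submodule.span_le]
  rintro _ ⟨t, ht, rfl⟩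
  obtain ⟨s, hs, hsw, α, -, hα⟩ := stM_reduce (L := L) (v := v) hd hu _ _ t rfl rfl
  simp only [Set.mem_ofPred_eq] at ht
  have h1 := stR_mono (show stWt d t ≤ w + 1 by omega) hα
  have h2 : stMon L d u v s ∈ stR L d u v (w + 1) :=
    Submodule.subset_span ⟨s, ⟨hs, by omega⟩, rfl⟩
  have := Submodule.add_mem _ h1 (Submodule.smul_mem _ α h2)
  simpa using this

lemma stR_finrank (w : ℕ) : Module.Finite K (stR L d u v w) ∧ Module.finrank K (stR L d u v w) ≤ w := by
  have hfin : Set.Finite {t | stRed d t ∧ stWt d t < w} := by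
    refine Set.Finite.of_finite_image (f := stWt d) ((Set.finite_lt_nat w).subset ?_) ?_
    · rintro _ ⟨t, ht, rfl⟩; exact ht.2
    · intro s hs t ht h; exact stWt_inj d s t hs.1 ht.1 h
  have hf2 := hfin.image (stMon L d u v)
  refine ⟨FiniteDimensional.span_of_finite K hf2, ?_⟩
  have := hf2.fintype
  refine (finrank_span_le_card _).trans ?_
  rw [← Set.ncard_eq_toFinset_card']
  refine (Set.ncard_image_le hfin).trans ?_
  calc Set.ncard {t | stRed d t ∧ stWt d t < w} ≤ Set.ncard (Set.Iio w) := by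
        refine Set.ncard_le_ncard_of_injOn (stWt d) (fun t ht => ht.2) ?_ (Set.finite_lt_nat w)
        intro s hs t ht h; exact stWt_inj d s t hs.1 ht.1 h
    _ = w := by simp [Set.ncard_eq_toFinset_card']
end St

open Polynomial

section St
variable {K : Type*} {L : Type*} [Field K] [Field L] [Algebra K L] {d : ℕ} {u v : K}

lemma st_univ [IsAlgClosed L] (f : L[X]) (hf : f.Separable) (n : ℕ) (b : ℕ → L) (hn : n = f.natDegree)
    (h : ∀ y, f.eval y = 0 → ∑ i ∈ Finset.range n, b i * y ^ i = 0) : ∀ i < n, b i = 0 := by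
  classical
  set q : L[X] := ∑ i ∈ Finset.range n, C (b i) * X ^ i with hq
  have hc : ∀ i < n, q.coeff i = b i := by
    intro i hi
    simp [hq, finsetSum_coeff, coeff_X_pow, hi]
  rcases Nat.eq_zero_or_pos n with h0 | hpos
  · intro i hi; omega
  have hdeg : q.natDegree < n := by
    have : q.natDegree ≤ n - 1 := by
      refine natDegree_sum_le_of_forall_le _ _ fun i hi => ?_
      refine (natDegree_C_mul_X_pow_le _ _).trans ?_
      have := Finset.mem_range.1 hi
      omega
    omega
  have hcard : f.roots.toFinset.card = n := by
    rw [Multiset.toFinset_card_of_nodup (nodup_roots hf), hn]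
    exact (IsAlgClosed.splits f).natDegree_eq_card_roots.symm
  have : q = 0 := by
    refine eq_zero_of_natDegree_lt_card_of_eval_eq_zero' q f.roots.toFinset ?_ (by rw [hcard]; exact hdeg)
    intro y hy
    rw [Multiset.mem_toFinset] at hy
    have := h y (isRoot_of_mem_roots hy)
    rw [← this, hq]
    simp [eval_finsetSum]
  intro i hi
  rw [← hc i hi, this]; simp

lemma st_grid [IsAlgClosed L] (hd : 0 < d) (hchar : ((d + 1 : ℕ) : L) = 0) (x : L) (hx : x ≠ 0)
    (hx2 : x ^ 2 + 1 ≠ 0) (b : ℕ → ℕ → L)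
    (h : ∀ p : StPt L d u v, p.x = x →
      ∑ j ∈ Finset.range (d + 1), (∑ i ∈ Finset.range d, b i j * p.y ^ i) * p.z ^ j = 0) :
    ∀ i < d, ∀ j < d + 1, b i j = 0 := by
  have hd0 : (d : L) ≠ 0 := by
    intro h0
    push_cast at hchar
    rw [h0] at hchar; simp at hchar
  have hF : x ^ (d + 1) + x ^ (d - 1) ≠ 0 := by
    obtain ⟨e, rfl⟩ : ∃ e, d = e + 1 := ⟨d - 1, by omega⟩
    have : x ^ (e + 1 + 1) + x ^ (e + 1 - 1) = x ^ e * (x ^ 2 + 1) := by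
      simp only [Nat.add_sub_cancel]; ring
    rw [this]
    exact mul_ne_zero (pow_ne_zero _ hx) hx2
  intro i hi j hj
  refine st_univ (X ^ d - C (x ^ (d + 1) + x ^ (d - 1))) (separable_X_pow_sub_C _ hd0 hF) d
    (fun i => b i j) (by rw [natDegree_X_pow_sub_C]) ?_ i hi
  intro y hy
  have hy' : y ^ d = x ^ (d + 1) + x ^ (d - 1) := by
    simpa [sub_eq_zero] using hy
  set g : L := algebraMap K L u * x ^ (d + 2) + algebraMap K L v * x ^ d with hg
  have hnd : (X ^ (d + 1) - (C (x ^ d) * X + C g) : L[X]).natDegree = d + 1 := by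
    rw [natDegree_sub_eq_left_of_natDegree_lt]
    · simp
    · refine lt_of_le_of_lt natDegree_linear_le ?_
      simp; omega
  refine st_univ (X ^ (d + 1) - (C (x ^ d) * X + C g)) ?_ (d + 1)
    (fun j => ∑ i ∈ Finset.range d, b i j * y ^ i) hnd.symm ?_ j hj
  · rw [separable_def]
    have hder : derivative (X ^ (d + 1) - (C (x ^ d) * X + C g) : L[X]) = - C (x ^ d) := by
      rw [derivative_sub, derivative_X_pow, hchar, derivative_add, derivative_C_mul, derivative_C]
      simp
    rw [hder]
    refine ⟨0, - C ((x ^ d)⁻¹), ?_⟩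
    have : (x ^ d)⁻¹ * x ^ d = 1 := inv_mul_cancel₀ (pow_ne_zero _ hx)
    simp only [zero_mul, zero_add, neg_mul_neg, ← C_mul, this, C_1]
  · intro z hz
    have hz' : z ^ (d + 1) = x ^ d * z + g := by
      simpa [sub_eq_zero] using hz
    exact h ⟨x, y, z, hy', by rw [hz', hg]; ring⟩ rfl

lemma st_zero [IsAlgClosed L] (hd : 0 < d) (hchar : ((d + 1 : ℕ) : L) = 0) (M : ℕ)
    (r : (ℕ × ℕ × ℕ) →₀ K) (hr : r ≠ 0) (hred : ∀ t ∈ r.support, stRed d t ∧ stWt d t ≤ M)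
    (N : Finset L) (hN : ∀ x ∈ N, x ≠ 0 ∧ x ^ 2 + 1 ≠ 0 ∧ ∀ p : StPt L d u v, p.x = x →
      (r.sum fun t c => c • stMon L d u v t) p = 0) : N.card * (d * (d + 1)) ≤ M := by
  classical
  obtain ⟨⟨k0, i0, j0⟩, ht0⟩ := Finsupp.support_nonempty_iff.2 hr
  -- coefficient polynomials
  let B : ℕ → ℕ → L[X] := fun i j =>
    ∑ t ∈ r.support.filter (fun t => t.2.1 = i ∧ t.2.2 = j), C (algebraMap K L (r t)) * X ^ t.1
  have hB0 : B i0 j0 ≠ 0 := by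
    intro h0
    have : (B i0 j0).coeff k0 = algebraMap K L (r (k0, i0, j0)) := by
      simp only [B, finsetSum_coeff, coeff_C_mul, coeff_X_pow]
      rw [Finset.sum_eq_single (k0, i0, j0)]
      · simp
      · rintro ⟨k, i, j⟩ hm hne
        simp only [Finset.mem_filter] at hm
        have : k0 ≠ k := by
          rintro rfl; apply hne; rw [hm.2.1, hm.2.2]
        simp [this]
      · intro h; exfalso; apply h; simp only [Finset.mem_filter, and_self, and_true]; exact ht0
    rw [h0, coeff_zero] at this
    have h2 := (map_eq_zero (algebraMap K L)).1 this.symm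
    exact (Finsupp.mem_support_iff.1 ht0) h2
  have hdeg : (B i0 j0).natDegree * (d * (d + 1)) ≤ M := by
    have hm : (B i0 j0).natDegree ≤ M / (d * (d + 1)) := by
      refine natDegree_sum_le_of_forall_le _ _ ?_
      intro t ht
      refine (natDegree_C_mul_X_pow_le _ _).trans ?_
      rw [Nat.le_div_iff_mul_le (by positivity)]
      simp only [Finset.mem_filter] at ht
      have := (hred t ht.1).2
      simp only [stWt] at this
      omega
    exact (Nat.le_div_iff_mul_le (by positivity)).1 hm
  have hred0 := (hred _ ht0).1
  have hroots : ∀ x ∈ N, (B i0 j0).eval x = 0 := by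
    intro x hx
    obtain ⟨h1, h2, h3⟩ := hN x hx
    refine st_grid (u := u) (v := v) hd hchar x h1 h2 (fun i j => (B i j).eval x) ?_ i0 hred0.1 j0 (Nat.lt_succ_of_le hred0.2)
    intro p hp
    rw [← h3 p hp, Finsupp.sum, Finset.sum_apply]
    simp only [B, eval_finsetSum, eval_mul, eval_C, eval_pow, eval_X]
    simp only [Finset.sum_mul]
    rw [← Finset.sum_fiberwise_of_maps_to (s := r.support) (t := Finset.range (d + 1)) (g := fun t => t.2.2)
      (fun t ht => Finset.mem_range.2 (Nat.lt_succ_of_le (hred t ht).1.2))]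
    refine Finset.sum_congr rfl fun j _ => ?_
    rw [← Finset.sum_fiberwise_of_maps_to (t := Finset.range d) (g := fun t : ℕ × ℕ × ℕ => t.2.1)
      (fun t ht => Finset.mem_range.2 ((hred t (Finset.mem_filter.1 ht).1).1.1))]
    refine Finset.sum_congr rfl fun i _ => ?_
    rw [Finset.filter_filter]
    refine Finset.sum_congr ?_ fun t ht => ?_
    · ext t; simp only [Finset.mem_filter]; tauto
    · simp only [Finset.mem_filter] at ht
      obtain ⟨_, hi, hj⟩ := ht
      simp only [Pi.smul_apply, stMon, hp]
      subst hi; subst hj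
      simp only [Algebra.smul_def]
      ring
  have : N.card ≤ (B i0 j0).natDegree := by
    by_contra hlt
    push Not at hlt
    exact hB0 (eq_zero_of_natDegree_lt_card_of_eval_eq_zero' _ N hroots hlt)
  exact (Nat.mul_le_mul_right _ this).trans hdeg

lemma stR_repr {w : ℕ} {f : StPt L d u v → L} (hf : f ∈ stR L d u v w) :
    ∃ r : (ℕ × ℕ × ℕ) →₀ K, (∀ t ∈ r.support, stRed d t ∧ stWt d t < w) ∧
      (r.sum fun t c => c • stMon L d u v t) = f := by
  rw [stR, Finsupp.mem_span_image_iff_linearCombination] at hf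
  obtain ⟨r, hr, hrf⟩ := hf
  refine ⟨r, fun t ht => ?_, ?_⟩
  · exact (Finsupp.mem_supported K r).1 hr ht
  · rw [← hrf, Finsupp.linearCombination_apply]

lemma st_good_points [IsAlgClosed L] (n : ℕ) : ∃ N : Finset L, N.card = n ∧ ∀ x ∈ N, x ≠ 0 ∧ x ^ 2 + 1 ≠ 0 := by
  classical
  have : Infinite L := IsAlgClosed.instInfinite
  have hfin : Set.Finite {x : L | ¬ (x ≠ 0 ∧ x ^ 2 + 1 ≠ 0)} := by
    have : (X * (X ^ 2 + 1) : L[X]) ≠ 0 := by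
      refine mul_ne_zero X_ne_zero ?_
      exact (monic_X_pow_add_C 1 two_ne_zero).ne_zero
    refine (finite_setOfPred_isRoot this).subset ?_
    intro x hx
    simp only [Set.mem_ofPred_eq] at hx ⊢
    simp only [IsRoot, eval_mul, eval_X, eval_add, eval_pow, eval_one]
    by_contra h
    exact hx ⟨left_ne_zero_of_mul h, right_ne_zero_of_mul h⟩
  have hinf := hfin.infinite_compl
  obtain ⟨N, hN, hc⟩ := hinf.exists_subset_card_eq n
  refine ⟨N, hc, fun x hx => ?_⟩
  have := hN hx
  simpa using this

lemma stMon_not_mem [IsAlgClosed L] (hd : 0 < d) (hchar : ((d + 1 : ℕ) : L) = 0)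
    (t : ℕ × ℕ × ℕ) (ht : stRed d t) : stMon L d u v t ∉ stR L d u v (stWt d t) := by
  classical
  intro hmem
  obtain ⟨r, hr, hrt⟩ := stR_repr hmem
  obtain ⟨N, hNc, hN⟩ := st_good_points (L := L) (stWt d t + 1)
  have hrt0 : r t = 0 := by
    by_contra h
    have := (hr t (Finsupp.mem_support_iff.2 h)).2
    omega
  have := st_zero (u := u) (v := v) hd hchar (stWt d t) (r - Finsupp.single t 1) ?_ ?_ N ?_
  · rw [hNc] at this
    have h1 : 1 ≤ d * (d + 1) := Nat.one_le_iff_ne_zero.2 (by positivity)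
    nlinarith
  · intro h0
    have := DFunLike.congr_fun h0 t
    simp [hrt0] at this
  · intro s hs
    have hs' : s ∈ r.support ∪ (Finsupp.single t (1 : K)).support := Finsupp.support_sub hs
    rw [Finset.mem_union] at hs'
    rcases hs' with h | h
    · exact ⟨(hr s h).1, (hr s h).2.le⟩
    · have := Finsupp.support_single_subset h
      rw [Finset.mem_singleton] at this
      subst this
      exact ⟨ht, le_rfl⟩
  · intro x hx
    refine ⟨(hN x hx).1, (hN x hx).2, fun p _ => ?_⟩
    rw [Finsupp.sum_sub_index (fun a b c => sub_smul _ _ _), hrt, Finsupp.sum_single_index (zero_smul K (stMon L d u v t))]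
    simp
end St

open Polynomial

section St
variable {K : Type*} {L : Type*} [Field K] [Field L] [Algebra K L] {d : ℕ} {u v : K}

lemma stMon_pow (t : ℕ × ℕ × ℕ) (n : ℕ) : stMon L d u v t ^ n = stMon L d u v (n • t) := by
  funext p
  simp only [stMon, Pi.pow_apply, Prod.smul_fst, Prod.smul_snd, smul_eq_mul]
  rw [mul_pow, mul_pow, ← pow_mul, ← pow_mul, ← pow_mul, mul_comm n, mul_comm n, mul_comm n]

lemma stWt_smul (t : ℕ × ℕ × ℕ) (n : ℕ) : stWt d (n • t) = n * stWt d t := by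
  simp only [stWt, Prod.smul_fst, Prod.smul_snd, smul_eq_mul]
  ring

/-- the twisted monomial -/
def stTw (L : Type*) [Field L] [Algebra K L] (d : ℕ) (u v : K) (c τ : K) (t : ℕ × ℕ × ℕ) : StPt L d u v → L :=
  fun p => p.x ^ t.1 * (algebraMap K L c * p.y) ^ t.2.1 * (p.z + algebraMap K L τ * p.x) ^ t.2.2

lemma stTw_mem (c τ : K) (t : ℕ × ℕ × ℕ) : stTw L d u v c τ t ∈ stV L d u v (stWt d t) := by
  have hx : stMon L d u v (1, 0, 0) ∈ stV L d u v (d * (d + 1)) :=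
    Submodule.subset_span ⟨_, by simp [stWt], rfl⟩
  have hy : stMon L d u v (0, 1, 0) ∈ stV L d u v ((d + 1) ^ 2) :=
    Submodule.subset_span ⟨_, by simp [stWt], rfl⟩
  have hz : stMon L d u v (0, 0, 1) ∈ stV L d u v (d * (d + 2)) :=
    Submodule.subset_span ⟨_, by simp [stWt], rfl⟩
  have hz' : stMon L d u v (0, 0, 1) + τ • stMon L d u v (1, 0, 0) ∈ stV L d u v (d * (d + 2)) :=
    Submodule.add_mem _ hz (Submodule.smul_mem _ _ (stV_mono (by nlinarith) hx))
  have := stV_mul (stV_mul (stV_pow hx t.1) (stV_pow (Submodule.smul_mem _ c hy) t.2.1)) (stV_pow hz' t.2.2)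
  suffices e : stTw L d u v c τ t = stMon L d u v (1, 0, 0) ^ t.1 * (c • stMon L d u v (0, 1, 0)) ^ t.2.1 *
      (stMon L d u v (0, 0, 1) + τ • stMon L d u v (1, 0, 0)) ^ t.2.2 by
    rw [e]; exact this
  funext p
  simp only [stTw, Pi.mul_apply, Pi.pow_apply, Pi.smul_apply, Pi.add_apply, stMon]
  simp only [Algebra.smul_def]
  simp

lemma st_main [IsAlgClosed L] (p e R0 : ℕ) [Fact p.Prime] [CharP K p] [CharP L p] (hR0 : R0 = p ^ e)
    (hsurj : ∀ a : K, ∃ b : K, b ^ R0 = a)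
    (hd : 0 < d) (hchar : ((d + 1 : ℕ) : L) = 0) (hu : u ≠ 0) (c τ : K) (κ : ℕ) (hκ : κ = 2 * (d + 1) ^ 3)
    (hbig : κ ^ 2 + 3 * κ + 1 < R0)
    (N : Finset L) (hN : ∀ x ∈ N, x ≠ 0 ∧ x ^ 2 + 1 ≠ 0 ∧ ∀ P : StPt L d u v, P.x = x →
      P.x ^ (R0 * R0) = P.x ∧ P.y ^ (R0 * R0) = algebraMap K L c * P.y ∧
      P.z ^ (R0 * R0) = P.z + algebraMap K L τ * P.x) :
    N.card * (d * (d + 1)) ≤ R0 * R0 + (2 * κ + 1) * R0 := by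
  classical
  have hex : ∀ w, ∃ t, κ ≤ w → stRed d t ∧ stWt d t = w := by
    intro w
    by_cases h : κ ≤ w
    · obtain ⟨t, ht⟩ := stWt_surj d hd w (hκ ▸ h)
      exact ⟨t, fun _ => ht⟩
    · exact ⟨0, fun h' => absurd h' h⟩
  choose T hT using hex
  set m := R0 + 2 * κ with hm
  obtain ⟨l, hl⟩ : ∃ l, R0 = l + 1 := ⟨R0 - 1, by omega⟩
  set S : Finset (ℕ × ℕ) := Finset.Icc κ m ×ˢ Finset.Icc κ l with hS
  have hScard : l * R0 + m + 1 < S.card := by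
    rw [hS, Finset.card_product, Nat.card_Icc, Nat.card_Icc]
    have e1 : m + 1 - κ = R0 + κ + 1 := by omega
    obtain ⟨a, ha⟩ : ∃ a, R0 = κ + a := Nat.exists_eq_add_of_le (by nlinarith)
    have e2 : l + 1 - κ = a := by omega
    rw [e1, e2, hm]
    have hla : l = κ + a - 1 := by omega
    zify at hbig ha hl ⊢
    nlinarith
  -- the vectors
  let vec : S → StPt L d u v → L := fun s => stMon L d u v (T s.1.2) ^ R0 * stTw L d u v c τ (T s.1.1)
  have hmemS : ∀ s : S, κ ≤ s.1.1 ∧ s.1.1 ≤ m ∧ κ ≤ s.1.2 ∧ s.1.2 ≤ l := by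
    rintro ⟨⟨a, b⟩, hs⟩
    simp only [hS, Finset.mem_product, Finset.mem_Icc] at hs
    simp only; omega
  have hvec : ∀ s, vec s ∈ stR L d u v (l * R0 + m + 1) := by
    intro s
    obtain ⟨h1, h2, h3, h4⟩ := hmemS s
    refine stV_le_stR hd hu _ ?_
    have ha : stMon L d u v (T s.1.2) ∈ stV L d u v l :=
      Submodule.subset_span ⟨_, by simpa [(hT _ h3).2] using h4, rfl⟩
    have hb := stTw_mem (L := L) (d := d) (u := u) (v := v) c τ (T s.1.1)
    rw [(hT _ h1).2] at hb
    have := stV_mul (stV_pow ha R0) (stV_mono h2 hb)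
    rwa [mul_comm R0 l] at this
  obtain ⟨hfinite, hrank⟩ := stR_finrank (L := L) (d := d) (u := u) (v := v) (l * R0 + m + 1)
  have hdep : ¬ LinearIndependent K (fun s : S => (⟨vec s, hvec s⟩ : stR L d u v (l * R0 + m + 1))) := by
    intro hli
    have := hli.fintype_card_le_finrank
    rw [Fintype.card_coe] at this
    omega
  obtain ⟨g, hg0, s1, hs1⟩ := Fintype.not_linearIndependent_iff.1 hdep
  have hg : ∑ s, g s • vec s = 0 := by
    have := congrArg Subtype.val hg0
    simpa using this
  choose C hC using fun s => hsurj (g s)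
  have hR0pos : 0 < R0 := by omega
  have hC1 : C s1 ≠ 0 := by
    intro h; apply hs1; rw [← hC s1, h, zero_pow hR0pos.ne']
  let ω : S → ℕ := fun s => s.1.2 + R0 * s.1.1
  let E : S → ℕ × ℕ × ℕ := fun s => T s.1.2 + R0 • T s.1.1
  have hEω : ∀ s, stWt d (E s) = ω s := by
    intro s
    obtain ⟨h1, h2, h3, h4⟩ := hmemS s
    simp only [E, ω, stWt_add, stWt_smul, (hT _ h1).2, (hT _ h3).2]
  have hωinj : Function.Injective ω := by
    intro s t hst
    obtain ⟨h1, h2, h3, h4⟩ := hmemS s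
    obtain ⟨h1', h2', h3', h4'⟩ := hmemS t
    simp only [ω] at hst
    have hs2 : s.1.2 < R0 := by omega
    have ht2 : t.1.2 < R0 := by omega
    have a1 : s.1.2 = t.1.2 := by
      have := congrArg (· % R0) hst
      simpa [Nat.add_mul_mod_self_left, Nat.mod_eq_of_lt hs2, Nat.mod_eq_of_lt ht2] using this
    have a2 : s.1.1 = t.1.1 := by
      rw [a1] at hst
      exact Nat.eq_of_mul_eq_mul_left hR0pos (by omega)
    exact Subtype.ext (Prod.ext a2 a1)
  set G : StPt L d u v → L := ∑ s, C s • stMon L d u v (E s) with hG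
  have hmon : ∀ s, stMon L d u v (E s) ∈ stR L d u v (ω s + 1) := fun s =>
    stV_le_stR hd hu _ (Submodule.subset_span ⟨_, by simp [hEω s], rfl⟩)
  have hGne : G ≠ 0 := by
    intro hG0
    obtain ⟨s0, hs0, hmax⟩ := Finset.exists_max_image (Finset.univ.filter fun s => C s ≠ 0) ω
      ⟨s1, by simp [hC1]⟩
    have hCs0 : C s0 ≠ 0 := (Finset.mem_filter.1 hs0).2
    have hsm : C s0 • stMon L d u v (E s0) ∈ stR L d u v (ω s0) := by
      have : C s0 • stMon L d u v (E s0) = - ∑ s ∈ Finset.univ.erase s0, C s • stMon L d u v (E s) := by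
        rw [eq_neg_iff_add_eq_zero, Finset.add_sum_erase _ (fun s => C s • stMon L d u v (E s)) (Finset.mem_univ s0), ← hG, hG0]
      rw [this]
      refine Submodule.neg_mem _ (Submodule.sum_mem _ fun s hs => ?_)
      by_cases h0 : C s = 0
      · rw [h0, zero_smul]; exact Submodule.zero_mem _
      · refine Submodule.smul_mem _ _ (stR_mono ?_ (hmon s))
        have h1 := hmax s (by simp [h0])
        have h2 : ω s ≠ ω s0 := fun h => (Finset.mem_erase.1 hs).1 (hωinj h)
        omega
    have hsm' : stMon L d u v (E s0) ∈ stR L d u v (ω s0) := (Submodule.smul_mem_iff _ hCs0).1 hsm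
    obtain ⟨t, ht, htw, α, hα0, hα⟩ := stM_reduce (L := L) (v := v) hd hu _ _ (E s0) (hEω s0) rfl
    have := Submodule.sub_mem _ hsm' hα
    rw [sub_sub_cancel] at this
    have := (Submodule.smul_mem_iff _ hα0).1 this
    rw [← htw] at this
    exact stMon_not_mem hd hchar t ht this
  have hGmem : G ∈ stR L d u v (l + m * R0 + 1) := by
    refine Submodule.sum_mem _ fun s _ => Submodule.smul_mem _ _ (stR_mono ?_ (hmon s))
    obtain ⟨h1, h2, h3, h4⟩ := hmemS s
    simp only [ω]
    have := Nat.mul_le_mul_left R0 h2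
    rw [mul_comm m]
    omega
  obtain ⟨r, hr, hrG⟩ := stR_repr hGmem
  have hr0 : r ≠ 0 := by
    rintro rfl; apply hGne; rw [← hrG]; simp
  have := st_zero (u := u) (v := v) hd hchar (l + m * R0) r hr0
    (fun t ht => ⟨(hr t ht).1, Nat.lt_succ_iff.1 (hr t ht).2⟩) N ?_
  · refine this.trans ?_
    rw [hm]; nlinarith
  · intro x hx
    obtain ⟨h1, h2, h3⟩ := hN x hx
    refine ⟨h1, h2, fun P hP => ?_⟩
    obtain ⟨hx', hy', hz'⟩ := h3 P hP
    rw [hrG]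
    have hpow : (G P) ^ R0 = 0 := by
      have : G P = ∑ s, algebraMap K L (C s) * (stMon L d u v (T s.1.2) P * stMon L d u v (T s.1.1) P ^ R0) := by
        rw [hG, Finset.sum_apply]
        refine Finset.sum_congr rfl fun s _ => ?_
        simp only [E]
        rw [← stM_mul, ← stMon_pow]
        simp [Algebra.smul_def]
      rw [this, hR0, sum_pow_char_pow, ← hR0]
      have h0 := congrFun hg P
      rw [Finset.sum_apply] at h0
      rw [Pi.zero_apply] at h0
      rw [← h0]
      refine Finset.sum_congr rfl fun s _ => ?_
      simp only [vec, Pi.smul_apply, Pi.mul_apply, Pi.pow_apply]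
      rw [mul_pow, ← map_pow, hC s, Algebra.smul_def, mul_pow, ← pow_mul]
      congr 2
      simp only [stMon, stTw]
      rw [← hz', ← hy', mul_pow, mul_pow, pow_right_comm, hx', pow_right_comm P.y, pow_right_comm P.z]
    exact pow_eq_zero_iff hR0pos.ne' |>.1 hpow
end St

open Polynomial

lemma st_trace_pow {L : Type*} [Field L] (p f : ℕ) [Fact p.Prime] [CharP L p] (Q : ℕ) (hQ : Q = p ^ f)
    (ζ g : L) (h : ζ ^ Q = ζ + g) (i : ℕ) : ζ ^ (Q ^ i) = ζ + ∑ j ∈ Finset.range i, g ^ (Q ^ j) := by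
  induction i with
  | zero => simp
  | succ i ih =>
    rw [pow_succ', pow_mul, h, Finset.sum_range_succ]
    have : Q ^ i = p ^ (f * i) := by rw [hQ, pow_mul]
    rw [this, add_pow_char_pow, ← this, ih]; ring

lemma st_count_aux (F K L : Type*) [Field F] [Fintype F] [DecidableEq F] [Field K] [Fintype K]
    [Algebra F K] [Field L] [Algebra K L] [IsAlgClosed L]
    (h : ℕ) (hK : Fintype.card K = Fintype.card F ^ (2 * h)) (u v : K) (hu : u ≠ 0) (c τ : F)
    (hc : c ≠ 0) (κ : ℕ) (hκ : κ = 2 * (Fintype.card F) ^ 3)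
    (hbig : κ ^ 2 + 3 * κ + 1 < Fintype.card F ^ h) :
    (Finset.univ.filter fun x : K => Algebra.norm F (x + x⁻¹) = c ∧
      Algebra.trace F K (u * x + v * x⁻¹) = τ).card * ((Fintype.card F - 1) * Fintype.card F) ≤
      Fintype.card F ^ (2 * h) + (2 * κ + 1) * Fintype.card F ^ h := by
  classical
  obtain ⟨p, hp⟩ := CharP.exists F
  obtain ⟨f, hpp, hcard⟩ := FiniteField.card F p
  have : Fact p.Prime := ⟨hpp⟩
  have : CharP K p := charP_of_injective_algebraMap (algebraMap F K).injective p
  have : CharP L p := charP_of_injective_algebraMap (algebraMap K L).injective p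
  obtain ⟨d, hd⟩ : ∃ d, Fintype.card F = d + 1 := ⟨Fintype.card F - 1, by have := Fintype.card_pos (α := F); omega⟩
  have hd0 : 0 < d := by have := Fintype.one_lt_card (α := F); omega
  have hpf : d + 1 = p ^ (f : ℕ) := by rw [← hd, hcard]
  have hfin : Module.finrank F K = 2 * h := by
    have := Module.card_eq_pow_finrank (K := F) (V := K)
    rw [hK] at this
    exact (Nat.pow_right_injective (Fintype.one_lt_card (α := F)) this).symm
  rw [hd] at hK hκ hbig ⊢
  have key := st_main (L := L) (u := u) (v := v) (d := d) p ((f : ℕ) * h) ((d + 1) ^ h) (by rw [hpf, pow_mul])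
    (fun a => by
      obtain ⟨b, hb⟩ := (iterateFrobeniusEquiv K p ((f : ℕ) * h)).surjective a
      refine ⟨b, ?_⟩
      rw [hpf, ← pow_mul, ← hb]; simp [iterateFrobeniusEquiv_apply, iterateFrobenius_def])
    hd0 (by rw [hpf]; push_cast; rw [CharP.cast_eq_zero, zero_pow f.pos.ne']) hu (algebraMap F K c) (algebraMap F K τ) κ hκ hbig
    ((Finset.univ.filter fun x : K => Algebra.norm F (x + x⁻¹) = c ∧
      Algebra.trace F K (u * x + v * x⁻¹) = τ).image (algebraMap K L)) ?_
  · rw [Finset.card_image_of_injective _ (algebraMap K L).injective] at key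
    rw [Nat.add_sub_cancel]
    refine key.trans (le_of_eq ?_)
    ring
  · intro x hx
    simp only [Finset.mem_image, Finset.mem_filter, Finset.mem_univ, true_and] at hx
    obtain ⟨x, ⟨hn, ht⟩, rfl⟩ := hx
    have hx0 : x ≠ 0 := by
      rintro rfl
      simp [Algebra.norm_zero] at hn
      exact hc hn.symm
    have hx0' : algebraMap K L x ≠ 0 := by simpa using hx0
    have hR : (d + 1) ^ h * (d + 1) ^ h = Fintype.card K := by rw [hK]; ring
    rw [hR]
    refine ⟨hx0', ?_, ?_⟩
    · intro h0
      have h1 : x ^ 2 + 1 = 0 := (algebraMap K L).injective (by simpa using h0)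
      have h2 : x + x⁻¹ = 0 := by field_simp; rw [h1, mul_zero]
      rw [h2, Algebra.norm_zero] at hn
      exact hc hn.symm
    · intro P hP
      have hxR : P.x ^ Fintype.card K = P.x := by rw [hP, ← map_pow, FiniteField.pow_card]
      refine ⟨hxR, ?_, ?_⟩
      · have hdvd : d ∣ Fintype.card K - 1 := by
          rw [hK]; simpa using Nat.sub_dvd_pow_sub_pow (d + 1) 1 (2 * h)
        obtain ⟨e, he⟩ := hdvd
        have hR1 : Fintype.card K = d * e + 1 := by have := Fintype.card_pos (α := K); omega
        have hy : P.y ^ d = P.x ^ d * algebraMap K L (x + x⁻¹) := by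
          rw [P.hy, map_add, map_inv₀, ← hP]
          have : P.x ≠ 0 := by rw [hP]; exact hx0'
          obtain ⟨d', rfl⟩ : ∃ d', d = d' + 1 := ⟨d - 1, by omega⟩
          simp only [Nat.add_sub_cancel]
          field_simp
          ring
        have hnorm : algebraMap F K c = (x + x⁻¹) ^ e := by
          rw [← hn, FiniteField.algebraMap_norm_eq_pow, Nat.card_eq_fintype_card, Nat.card_eq_fintype_card, hd, hR1]
          simp [Nat.mul_div_cancel_left _ hd0]
        rw [hR1, pow_succ, pow_mul, hy, mul_pow, ← pow_mul, hnorm, map_pow]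
        congr 1
        rw [hP, ← map_pow, ← he, FiniteField.pow_card_sub_one_eq_one x hx0, map_one, one_mul]
      · have hPx : P.x ≠ 0 := by rw [hP]; exact hx0'
        have hζ : (P.z / P.x) ^ (d + 1) = P.z / P.x + algebraMap K L (u * x + v * x⁻¹) := by
          rw [div_pow, P.hz, map_add, map_mul, map_mul, map_inv₀, ← hP]
          obtain ⟨d', rfl⟩ : ∃ d', d = d' + 1 := ⟨d - 1, by omega⟩
          field_simp
          ring
        have := st_trace_pow p f (d + 1) hpf _ _ hζ (2 * h)
        rw [← hK, div_pow, hxR] at this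
        have h2 : ∑ j ∈ Finset.range (2 * h), (algebraMap K L (u * x + v * x⁻¹)) ^ ((d + 1) ^ j) =
            algebraMap K L (algebraMap F K τ) := by
          rw [← ht, FiniteField.algebraMap_trace_eq_sum_pow, hfin, Nat.card_eq_fintype_card, hd, map_sum]
          simp only [map_pow]
        rw [h2] at this
        field_simp at this
        rw [this]; ring

lemma st_count (F K : Type*) [Field F] [Fintype F] [DecidableEq F] [Field K] [Fintype K] [Algebra F K]
    (h : ℕ) (hK : Fintype.card K = Fintype.card F ^ (2 * h)) (u v : K) (hu : u ≠ 0) (c τ : F)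
    (hc : c ≠ 0) (κ : ℕ) (hκ : κ = 2 * (Fintype.card F) ^ 3)
    (hbig : κ ^ 2 + 3 * κ + 1 < Fintype.card F ^ h) :
    (Finset.univ.filter fun x : K => Algebra.norm F (x + x⁻¹) = c ∧
      Algebra.trace F K (u * x + v * x⁻¹) = τ).card * ((Fintype.card F - 1) * Fintype.card F) ≤
      Fintype.card F ^ (2 * h) + (2 * κ + 1) * Fintype.card F ^ h :=
  st_count_aux F K (AlgebraicClosure K) h hK u v hu c τ hc κ hκ hbig

open Polynomial

lemma mc_norm_le {F : Type*} [Field F] [Fintype F] (χ : MulChar F ℂ) (a : F) : ‖χ a‖ ≤ 1 := by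
  classical
  by_cases ha : a = 0
  · rw [ha, MulChar.map_zero]; simp
  · have := Complex.norm_eq_one_of_mem_rootsOfUnity (χ.apply_mem_rootsOfUnity (Units.mk0 a ha))
    simpa using this.le

lemma ac_norm {F : Type*} [Field F] [Fintype F] (ψ : AddChar F ℂ) (a : F) : ‖ψ a‖ = 1 :=
  AddChar.norm_apply ψ a

lemma bad_card (K : Type*) [Field K] [Fintype K] [DecidableEq K] :
    (Finset.univ.filter fun x : K => x + x⁻¹ = 0).card ≤ 3 := by
  have h0 : (X * (X ^ 2 + 1) : K[X]) ≠ 0 :=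
    mul_ne_zero X_ne_zero (Monic.ne_zero (by monicity!))
  have : (Finset.univ.filter fun x : K => x + x⁻¹ = 0) ⊆ (X * (X ^ 2 + 1) : K[X]).roots.toFinset := by
    intro x hx
    simp only [Finset.mem_filter, Finset.mem_univ, true_and] at hx
    rw [Multiset.mem_toFinset, mem_roots h0]
    by_cases hx0 : x = 0
    · simp [hx0]
    · simp only [IsRoot, eval_mul, eval_X, eval_add, eval_pow, eval_one]
      field_simp at hx
      rw [hx]; simp
  refine (Finset.card_le_card this).trans ((Multiset.toFinset_card_le _).trans ((card_roots' _).trans ?_))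
  compute_degree

lemma ext_bound (F K : Type*) [Field F] [Fintype F] [Field K] [Fintype K] [Algebra F K]
    (h : ℕ) (hK : Fintype.card K = Fintype.card F ^ (2 * h)) (u v : K) (hu : u ≠ 0)
    (χ : MulChar F ℂ) (ψ : AddChar F ℂ) (hψ : ψ ≠ 1) (κ : ℕ) (hκ : κ = 2 * (Fintype.card F) ^ 3)
    (hbig : κ ^ 2 + 3 * κ + 1 < Fintype.card F ^ h) :
    ‖∑ x : K, χ (Algebra.norm F (x + x⁻¹)) * ψ (Algebra.trace F K (u * x + v * x⁻¹))‖ ≤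
      (2 * κ + 4) * (Fintype.card F : ℝ) ^ h := by
  classical
  set Q := Fintype.card F with hQ
  have hQ1 : 1 < Q := Fintype.one_lt_card
  set T : Finset (F × F) := (Finset.univ.erase 0) ×ˢ Finset.univ with hT
  set N : F × F → ℕ := fun t => (Finset.univ.filter fun x : K => Algebra.norm F (x + x⁻¹) = t.1 ∧
      Algebra.trace F K (u * x + v * x⁻¹) = t.2).card with hN
  set B : ℝ := (Q ^ (2 * h) + (2 * κ + 1) * (Q : ℝ) ^ h) / ((Q - 1) * Q) with hB
  have hQ1' : (0 : ℝ) < (Q - 1) * Q := by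
    have : (1 : ℝ) < Q := by exact_mod_cast hQ1
    have : (0 : ℝ) < Q - 1 := by linarith
    positivity
  have hNB : ∀ t ∈ T, (N t : ℝ) ≤ B := by
    intro t ht
    have := st_count F K h hK u v hu t.1 t.2 (by simp [hT] at ht; exact ht) κ hκ hbig
    rw [hB, le_div_iff₀ hQ1']
    have h2 : ((N t * ((Q - 1) * Q) : ℕ) : ℝ) ≤ ((Q ^ (2 * h) + (2 * κ + 1) * Q ^ h : ℕ) : ℝ) := by
      exact_mod_cast this
    push_cast [Nat.cast_sub hQ1.le] at h2
    exact h2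
  have hmaps : ∀ x : K, x ∈ (Finset.univ.filter fun x : K => x + x⁻¹ ≠ 0) →
      (Algebra.norm F (x + x⁻¹), Algebra.trace F K (u * x + v * x⁻¹)) ∈ T := by
    intro x hx
    simp only [Finset.mem_filter, Finset.mem_univ, true_and] at hx
    simp [hT, Algebra.norm_eq_zero_iff, hx]
  have hfib : ∀ t ∈ T, ((Finset.univ.filter fun x : K => x + x⁻¹ ≠ 0).filter fun x =>
      (Algebra.norm F (x + x⁻¹), Algebra.trace F K (u * x + v * x⁻¹)) = t).card = N t := by
    intro t ht
    rw [hN, Finset.filter_filter]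
    congr 1
    ext x
    simp only [Finset.mem_filter, Finset.mem_univ, true_and, Prod.ext_iff]
    constructor
    · tauto
    · rintro ⟨h1, h2⟩
      refine ⟨?_, h1, h2⟩
      intro h0
      rw [h0, Algebra.norm_zero] at h1
      simp [hT] at ht
      exact ht h1.symm
  have hsumN : (Q : ℝ) ^ (2 * h) - 3 ≤ ∑ t ∈ T, (N t : ℝ) := by
    have h1 := Finset.card_eq_sum_card_fiberwise hmaps
    rw [Finset.sum_congr rfl hfib] at h1
    have h2 := Finset.card_filter_add_card_filter_not (s := (Finset.univ : Finset K)) (fun x => x + x⁻¹ = 0)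
    rw [h1, Finset.card_univ, hK] at h2
    have h3 := bad_card K
    have h4 : Q ^ (2 * h) ≤ 3 + ∑ t ∈ T, N t := by
      rw [← h2]; exact Nat.add_le_add_right h3 _
    have : ((Q ^ (2 * h) : ℕ) : ℝ) ≤ ((3 + ∑ t ∈ T, N t : ℕ) : ℝ) := by exact_mod_cast h4
    push_cast at this
    linarith
  have hS : ∑ x : K, χ (Algebra.norm F (x + x⁻¹)) * ψ (Algebra.trace F K (u * x + v * x⁻¹)) =
      ∑ t ∈ T, (N t : ℂ) * (χ t.1 * ψ t.2) := by
    have h1 : ∑ x : K, χ (Algebra.norm F (x + x⁻¹)) * ψ (Algebra.trace F K (u * x + v * x⁻¹)) =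
      ∑ x ∈ (Finset.univ.filter fun x : K => x + x⁻¹ ≠ 0), χ (Algebra.norm F (x + x⁻¹)) * ψ (Algebra.trace F K (u * x + v * x⁻¹)) := by
      symm
      refine Finset.sum_filter_of_ne ?_
      intro x _ hx h0
      apply hx
      rw [h0, Algebra.norm_zero, MulChar.map_zero, zero_mul]
    rw [h1, ← Finset.sum_fiberwise_of_maps_to hmaps]
    refine Finset.sum_congr rfl fun t ht => ?_
    rw [← hfib t ht, ← nsmul_eq_mul, ← Finset.sum_const]
    refine Finset.sum_congr rfl fun x hx => ?_
    rw [← (Finset.mem_filter.1 hx).2]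
  have hz : ∑ t ∈ T, χ t.1 * ψ t.2 = 0 := by
    rw [hT, Finset.sum_product]
    refine Finset.sum_eq_zero fun c _ => ?_
    dsimp only
    rw [← Finset.mul_sum, AddChar.sum_eq_zero_iff_ne_zero.2 hψ, mul_zero]
  have hS2 : ∑ t ∈ T, (N t : ℂ) * (χ t.1 * ψ t.2) = ∑ t ∈ T, ((N t : ℂ) - B) * (χ t.1 * ψ t.2) := by
    simp only [sub_mul]
    rw [Finset.sum_sub_distrib, ← Finset.mul_sum, hz, mul_zero, sub_zero]
  have hTcard : (T.card : ℝ) = (Q - 1) * Q := by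
    rw [hT, Finset.card_product, Finset.card_erase_of_mem (Finset.mem_univ _), Finset.card_univ]
    push_cast [Nat.cast_sub hQ1.le, ← hQ]
    rfl
  rw [hS, hS2]
  calc ‖∑ t ∈ T, ((N t : ℂ) - B) * (χ t.1 * ψ t.2)‖ ≤ ∑ t ∈ T, (B - N t) := by
        refine norm_sum_le_of_le _ fun t ht => ?_
        rw [norm_mul, norm_mul, ac_norm, mul_one]
        have h1 : ‖((N t : ℂ) - B)‖ = B - N t := by
          have : ((N t : ℂ) - B) = ((N t - B : ℝ) : ℂ) := by push_cast; rfl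
          rw [this, Complex.norm_real, Real.norm_eq_abs, abs_sub_comm, abs_of_nonneg]
          linarith [hNB t ht]
        rw [h1]
        have := mul_le_mul_of_nonneg_left (mc_norm_le χ t.1) (sub_nonneg.2 (hNB t ht))
        linarith
    _ = (Q ^ (2 * h) + (2 * κ + 1) * (Q : ℝ) ^ h) - ∑ t ∈ T, (N t : ℝ) := by
        rw [Finset.sum_sub_distrib, Finset.sum_const, nsmul_eq_mul, hTcard, hB, mul_div_cancel₀ _ hQ1'.ne']
    _ ≤ (2 * κ + 4) * (Q : ℝ) ^ h := by
        have : (1 : ℝ) ≤ (Q : ℝ) ^ h := one_le_pow₀ (by exact_mod_cast hQ1.le)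
        linarith

open Polynomial

section LF
variable {F : Type*} [Field F] [Fintype F]

lemma monicDeg_finite (F : Type*) [Field F] [Fintype F] (n : ℕ) :
    {h : F[X] | h.Monic ∧ h.natDegree = n}.Finite := by
  have : Finite (degreeLT F (n + 1)) := Finite.of_equiv _ (degreeLTEquiv F (n + 1)).toEquiv.symm
  refine Set.Finite.subset (Set.toFinite (degreeLT F (n + 1) : Set F[X])) ?_
  rintro h ⟨h1, h2⟩
  rw [SetLike.mem_coe, mem_degreeLT]
  refine (natDegree_lt_iff_degree_lt h1.ne_zero).1 ?_
  omega

noncomputable def monicDeg (F : Type*) [Field F] [Fintype F] (n : ℕ) : Finset F[X] :=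
  (monicDeg_finite F n).toFinset

lemma mem_monicDeg {n : ℕ} {h : F[X]} : h ∈ monicDeg F n ↔ h.Monic ∧ h.natDegree = n := by
  simp [monicDeg]

open Classical in
noncomputable def irrUpTo (F : Type*) [Field F] [Fintype F] (n : ℕ) : Finset F[X] :=
  ((Finset.range (n + 1)).biUnion (monicDeg F)).filter Irreducible

lemma mem_irrUpTo {n : ℕ} {h : F[X]} : h ∈ irrUpTo F n ↔ h.Monic ∧ Irreducible h ∧ h.natDegree ≤ n := by
  simp only [irrUpTo, Finset.mem_filter, Finset.mem_biUnion, Finset.mem_range, mem_monicDeg]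
  constructor
  · rintro ⟨⟨a, h1, h2, h3⟩, h4⟩
    exact ⟨h2, h4, by omega⟩
  · rintro ⟨h1, h2, h3⟩
    exact ⟨⟨_, by omega, h1, rfl⟩, h2⟩

noncomputable def lc (Λ : F[X] → ℂ) (k : ℕ) : ℂ := ∑ h ∈ monicDeg F k, Λ h

noncomputable def lS (Λ : F[X] → ℂ) (m : ℕ) : ℂ :=
  ∑ π ∈ (irrUpTo F m).filter (fun π => π.natDegree ∣ m), (π.natDegree : ℂ) * Λ π ^ (m / π.natDegree)

open Classical UniqueFactorizationMonoid in
lemma deg_identity (k : ℕ) (h : F[X]) (hm : h.Monic) (hk : h.natDegree = k) :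
    k = ∑ π ∈ irrUpTo F k, ∑ j ∈ Finset.Icc 1 k, if π ^ j ∣ h then π.natDegree else 0 := by
  have hne := hm.ne_zero
  have h1 : ∀ π ∈ irrUpTo F k, (∑ j ∈ Finset.Icc 1 k, if π ^ j ∣ h then π.natDegree else 0) =
      (normalizedFactors h).count π * π.natDegree := by
    intro π hπ
    obtain ⟨hπm, hπi, hπd⟩ := mem_irrUpTo.1 hπ
    have hdv : ∀ j, π ^ j ∣ h ↔ j ≤ (normalizedFactors h).count π := by
      intro j
      rw [pow_dvd_iff_le_emultiplicity, emultiplicity_eq_count_normalizedFactors hπi hne, hπm.normalize_eq_self]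
      exact Nat.cast_le
    have hck : (normalizedFactors h).count π ≤ k := by
      have := natDegree_le_of_dvd ((hdv _).2 le_rfl) hne
      rw [natDegree_pow, hk] at this
      have h2 := hπi.natDegree_pos
      nlinarith
    rw [← Finset.sum_filter, Finset.sum_const, smul_eq_mul]
    congr 1
    have : (Finset.Icc 1 k).filter (fun j => π ^ j ∣ h) = Finset.Icc 1 ((normalizedFactors h).count π) := by
      ext j
      simp only [Finset.mem_filter, Finset.mem_Icc, hdv]
      omega
    rw [this]; simp
  rw [Finset.sum_congr rfl h1]
  have h2 : h = (normalizedFactors h).prod := by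
    have := prod_normalizedFactors_eq hne
    rw [this, hm.normalize_eq_self]
  have h3 : ∀ π ∈ normalizedFactors h, π.Monic := by
    intro π hπ
    have := normalize_normalized_factor π hπ
    rw [← this]
    exact monic_normalize (irreducible_of_normalized_factor π hπ).ne_zero
  have h4 : k = ((normalizedFactors h).map natDegree).sum := by
    rw [← natDegree_multiset_prod_of_monic _ h3, ← h2, hk]
  conv_lhs => rw [h4, Finset.sum_multiset_map_count]
  simp only [smul_eq_mul]
  refine Finset.sum_subset ?_ ?_
  · intro π hπ
    rw [Multiset.mem_toFinset] at hπ
    refine mem_irrUpTo.2 ⟨h3 π hπ, irreducible_of_normalized_factor π hπ, ?_⟩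
    rw [← hk]
    exact natDegree_le_of_dvd (dvd_of_mem_normalizedFactors hπ) hne
  · intro π _ hπ
    rw [Multiset.mem_toFinset] at hπ
    rw [Multiset.count_eq_zero_of_notMem hπ, zero_mul]

lemma lam_pow (Λ : F[X] → ℂ) (h1 : Λ 1 = 1)
    (hmul : ∀ f g : F[X], f.Monic → g.Monic → Λ (f * g) = Λ f * Λ g) (π : F[X]) (hπ : π.Monic) (j : ℕ) :
    Λ (π ^ j) = Λ π ^ j := by
  induction j with
  | zero => simp [h1]
  | succ j ih => rw [pow_succ, hmul _ _ (hπ.pow j) hπ, ih, pow_succ]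

open Classical in
lemma lam_dvd (Λ : F[X] → ℂ)
    (hmul : ∀ f g : F[X], f.Monic → g.Monic → Λ (f * g) = Λ f * Λ g) (k : ℕ) (ρ : F[X]) (hρ : ρ.Monic) :
    ∑ h ∈ monicDeg F k, (if ρ ∣ h then Λ h else 0) =
      if ρ.natDegree ≤ k then Λ ρ * lc Λ (k - ρ.natDegree) else 0 := by
  rw [← Finset.sum_filter]
  split_ifs with hle
  · rw [lc, Finset.mul_sum]
    symm
    refine Finset.sum_bij (fun g _ => ρ * g) ?_ ?_ ?_ ?_
    · intro g hg
      obtain ⟨h1, h2⟩ := mem_monicDeg.1 hg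
      refine Finset.mem_filter.2 ⟨mem_monicDeg.2 ⟨hρ.mul h1, ?_⟩, dvd_mul_right _ _⟩
      rw [hρ.natDegree_mul h1, h2]; omega
    · intro g _ g' _ h
      exact mul_left_cancel₀ hρ.ne_zero h
    · intro h hh
      obtain ⟨h1, g, rfl⟩ := Finset.mem_filter.1 hh
      obtain ⟨h2, h3⟩ := mem_monicDeg.1 h1
      have hg : g.Monic := hρ.of_mul_monic_left h2
      refine ⟨g, mem_monicDeg.2 ⟨hg, ?_⟩, rfl⟩
      rw [hρ.natDegree_mul hg] at h3; omega
    · intro g hg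
      rw [hmul _ _ hρ (mem_monicDeg.1 hg).1]
  · refine Finset.sum_eq_zero fun h hh => ?_
    exfalso
    obtain ⟨h1, h2⟩ := Finset.mem_filter.1 hh
    obtain ⟨h3, h4⟩ := mem_monicDeg.1 h1
    have := natDegree_le_of_dvd h2 h3.ne_zero
    omega

open Classical in
lemma newton_id (Λ : F[X] → ℂ) (h1 : Λ 1 = 1)
    (hmul : ∀ f g : F[X], f.Monic → g.Monic → Λ (f * g) = Λ f * Λ g) (k : ℕ) :
    (k : ℂ) * lc Λ k = ∑ m ∈ Finset.Icc 1 k, lS Λ m * lc Λ (k - m) := by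
  have e1 : (k : ℂ) * lc Λ k = ∑ π ∈ irrUpTo F k, ∑ j ∈ Finset.Icc 1 k,
      (π.natDegree : ℂ) * (if j * π.natDegree ≤ k then Λ π ^ j * lc Λ (k - j * π.natDegree) else 0) := by
    have : (k : ℂ) * lc Λ k = ∑ h ∈ monicDeg F k, ∑ π ∈ irrUpTo F k, ∑ j ∈ Finset.Icc 1 k,
        (π.natDegree : ℂ) * (if π ^ j ∣ h then Λ h else 0) := by
      rw [lc, Finset.mul_sum]
      refine Finset.sum_congr rfl fun h hh => ?_
      obtain ⟨hm, hk⟩ := mem_monicDeg.1 hh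
      have := congrArg (Nat.cast : ℕ → ℂ) (deg_identity k h hm hk)
      conv_lhs => rw [this]
      push_cast
      rw [Finset.sum_mul]
      refine Finset.sum_congr rfl fun π _ => ?_
      rw [Finset.sum_mul]
      refine Finset.sum_congr rfl fun j _ => ?_
      split_ifs <;> simp
    rw [this, Finset.sum_comm]
    refine Finset.sum_congr rfl fun π hπ => ?_
    rw [Finset.sum_comm]
    refine Finset.sum_congr rfl fun j _ => ?_
    have hπm := (mem_irrUpTo.1 hπ).1
    rw [← Finset.mul_sum, lam_dvd Λ hmul k _ (hπm.pow j), natDegree_pow, lam_pow Λ h1 hmul _ hπm]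
  have e2 : ∑ m ∈ Finset.Icc 1 k, lS Λ m * lc Λ (k - m) = ∑ m ∈ Finset.Icc 1 k, ∑ π ∈ irrUpTo F k,
      if π.natDegree ∣ m then (π.natDegree : ℂ) * (Λ π ^ (m / π.natDegree) * lc Λ (k - m)) else 0 := by
    refine Finset.sum_congr rfl fun m hm => ?_
    rw [Finset.mem_Icc] at hm
    rw [lS, Finset.sum_mul, ← Finset.sum_filter]
    refine Finset.sum_congr ?_ fun π _ => by ring
    ext π
    simp only [Finset.mem_filter, mem_irrUpTo]
    constructor
    · rintro ⟨⟨a, b, c⟩, d⟩; exact ⟨⟨a, b, by omega⟩, d⟩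
    · rintro ⟨⟨a, b, c⟩, d⟩; exact ⟨⟨a, b, Nat.le_of_dvd (by omega) d⟩, d⟩
  rw [e1, e2, Finset.sum_comm]
  conv_rhs => rw [Finset.sum_comm]
  rw [Finset.sum_comm]
  refine Finset.sum_congr rfl fun π hπ => ?_
  have hd := (mem_irrUpTo.1 hπ).2.1.natDegree_pos
  rw [← Finset.sum_filter, ← Finset.mul_sum, ← Finset.sum_filter, Finset.mul_sum]
  refine Finset.sum_nbij' (fun j => j * π.natDegree) (fun m => m / π.natDegree) ?_ ?_ ?_ ?_ ?_
  · intro j hj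
    simp only [Finset.mem_filter, Finset.mem_Icc] at hj ⊢
    exact ⟨⟨Nat.mul_pos hj.1.1 hd, hj.2⟩, dvd_mul_left _ _⟩
  · intro m hm
    simp only [Finset.mem_filter, Finset.mem_Icc] at hm ⊢
    obtain ⟨⟨h1, h2⟩, c, rfl⟩ := hm
    rw [Nat.mul_div_cancel_left _ hd, mul_comm]
    refine ⟨⟨?_, ?_⟩, h2⟩
    · rcases Nat.eq_zero_or_pos c with rfl | h
      · simp at h1
      · exact h
    · nlinarith
  · intro j _
    simp [Nat.mul_div_cancel _ hd]
  · intro m hm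
    simp only [Finset.mem_filter] at hm
    exact Nat.div_mul_cancel hm.2
  · intro j _
    simp [Nat.mul_div_cancel _ hd]
end LF

open Polynomial

lemma quartic_coeff {a b c d a' b' c' d' : ℂ}
    (h : (X ^ 4 + C a * X ^ 3 + C b * X ^ 2 + C c * X + C d : ℂ[X]) =
      X ^ 4 + C a' * X ^ 3 + C b' * X ^ 2 + C c' * X + C d') : a = a' ∧ b = b' ∧ c = c' ∧ d = d' := by
  have e0 := congrArg (fun f => f.coeff 0) h
  have e1 := congrArg (fun f => f.coeff 1) h
  have e2 := congrArg (fun f => f.coeff 2) h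
  have e3 := congrArg (fun f => f.coeff 3) h
  simp [coeff_X, coeff_C] at e0 e1 e2 e3
  exact ⟨e3, e2, e1, e0⟩

lemma quartic_roots (c1 c2 c3 c4 : ℂ) : ∃ a b c d : ℂ,
    c1 = -(a+b+c+d) ∧ c2 = a*b+a*c+a*d+b*c+b*d+c*d ∧ c3 = -(a*b*c+a*b*d+a*c*d+b*c*d) ∧ c4 = a*b*c*d := by
  set p : ℂ[X] := X ^ 4 + C c1 * X ^ 3 + C c2 * X ^ 2 + C c3 * X + C c4 with hp
  have hm : p.Monic := by rw [hp]; monicity!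
  have hd : p.natDegree = 4 := by rw [hp]; compute_degree!
  have hs := IsAlgClosed.splits p
  have hr := hs.eq_prod_roots_of_monic hm
  have hc := hs.natDegree_eq_card_roots
  obtain ⟨l, hl⟩ := Quot.exists_rep p.roots
  change (l : Multiset ℂ) = p.roots at hl
  rw [← hl] at hr hc
  rw [hd, Multiset.coe_card] at hc
  match l, hc with
  | [a, b, c, d], _ =>
    refine ⟨a, b, c, d, ?_⟩
    have hx : p = X ^ 4 + C (-(a+b+c+d)) * X ^ 3 + C (a*b+a*c+a*d+b*c+b*d+c*d) * X ^ 2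
        + C (-(a*b*c+a*b*d+a*c*d+b*c*d)) * X + C (a*b*c*d) := by
      rw [hr]
      simp only [Multiset.map_coe, List.map_cons, List.map_nil, Multiset.prod_coe, List.prod_cons, List.prod_nil,
        map_neg, map_add, map_mul]
      ring
    have := quartic_coeff (hp.symm.trans hx)
    exact this

lemma newton_solve (c S : ℕ → ℂ) (h0 : c 0 = 1) (h5 : ∀ k, 5 ≤ k → c k = 0)
    (hN : ∀ k : ℕ, (k : ℂ) * c k = ∑ m ∈ Finset.Icc 1 k, S m * c (k - m)) :
    ∃ α : Fin 4 → ℂ, ∀ m, 1 ≤ m → S m = - ∑ j, α j ^ m := by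
  obtain ⟨a, b, e, d, h1, h2, h3, h4⟩ := quartic_roots (c 1) (c 2) (c 3) (c 4)
  refine ⟨![a, b, e, d], fun m hm => ?_⟩
  simp only [Fin.sum_univ_four, Matrix.cons_val]
  have s1 : S 1 = - (a + b + e + d) := by
    have := hN 1
    simp [h0] at this
    rw [← this, h1]
  have s2 : S 2 = - (a ^ 2 + b ^ 2 + e ^ 2 + d ^ 2) := by
    have := hN 2
    simp [h0, Finset.sum_Icc_succ_top] at this
    rw [s1, h1, h2] at this
    linear_combination -this
  have s3 : S 3 = - (a ^ 3 + b ^ 3 + e ^ 3 + d ^ 3) := by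
    have := hN 3
    simp [h0, Finset.sum_Icc_succ_top] at this
    rw [s1, s2, h1, h2, h3] at this
    linear_combination -this
  have s4 : S 4 = - (a ^ 4 + b ^ 4 + e ^ 4 + d ^ 4) := by
    have := hN 4
    simp [h0, Finset.sum_Icc_succ_top] at this
    rw [s1, s2, s3, h1, h2, h3, h4] at this
    linear_combination -this
  induction m using Nat.strong_induction_on with
  | _ m ih =>
    by_cases hm4 : m ≤ 4
    · interval_cases m
      · rw [s1]; ring
      · exact s2
      · exact s3
      · exact s4
    · obtain ⟨k, rfl⟩ : ∃ k, m = k + 5 := ⟨m - 5, by omega⟩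
      have := hN (k + 5)
      rw [h5 _ (by omega), mul_zero, Finset.sum_Icc_succ_top (by omega), Finset.sum_Icc_succ_top (by omega),
        Finset.sum_Icc_succ_top (by omega), Finset.sum_Icc_succ_top (by omega), Finset.sum_Icc_succ_top (by omega),
        Finset.sum_eq_zero, show k + 5 - (k + 0 + 1) = 4 by omega, show k + 5 - (k + 1 + 1) = 3 by omega,
        show k + 5 - (k + 2 + 1) = 2 by omega, show k + 5 - (k + 3 + 1) = 1 by omega,
        show k + 5 - (k + 4 + 1) = 0 by omega, h0, h1, h2, h3, h4,
        ih (k + 0 + 1) (by omega) (by omega), ih (k + 1 + 1) (by omega) (by omega), ih (k + 2 + 1) (by omega) (by omega),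
        ih (k + 3 + 1) (by omega) (by omega)] at this
      · rw [show k + 5 = k + 4 + 1 by omega]
        linear_combination -this
      · intro i hi
        rw [Finset.mem_Icc] at hi
        rw [h5 _ (by omega), mul_zero]

open Polynomial

lemma power_sum_bound {ι : Type*} [Fintype ι] [DecidableEq ι] (β : ι → ℂ) (Q C0 : ℝ) (hQ : 0 < Q) (H : ℕ)
    (hb : ∀ h, H ≤ h → ‖∑ j, β j ^ h‖ ≤ C0 * Q ^ h) (j0 : ι) : ‖β j0‖ ≤ Q := by
  classical
  by_contra! hlt
  set q : ℂ[X] := ∏ γ ∈ (Finset.univ.image β).erase (β j0), (X - C γ) with hq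
  have hq0 : q.eval (β j0) ≠ 0 := by
    rw [hq, eval_prod, Finset.prod_ne_zero_iff]
    intro γ hγ
    simp only [eval_sub, eval_X, eval_C]
    exact sub_ne_zero.2 (Finset.ne_of_mem_erase hγ).symm
  have hqz : ∀ j, β j ≠ β j0 → q.eval (β j) = 0 := by
    intro j hj
    rw [hq, eval_prod]
    refine Finset.prod_eq_zero (Finset.mem_erase.2 ⟨hj, Finset.mem_image_of_mem _ (Finset.mem_univ j)⟩) ?_
    simp
  set n : ℕ := (Finset.univ.filter fun j => β j = β j0).card with hn
  have hn1 : 1 ≤ n := Finset.card_pos.2 ⟨j0, by simp⟩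
  have key : ∀ h, ∑ i ∈ Finset.range (q.natDegree + 1), q.coeff i * ∑ j, β j ^ (h + i) =
      n * (β j0 ^ h * q.eval (β j0)) := by
    intro h
    simp only [Finset.mul_sum]
    rw [Finset.sum_comm]
    have : ∀ j, ∑ i ∈ Finset.range (q.natDegree + 1), q.coeff i * β j ^ (h + i) =
        if β j = β j0 then β j0 ^ h * q.eval (β j0) else 0 := by
      intro j
      have e : ∑ i ∈ Finset.range (q.natDegree + 1), q.coeff i * β j ^ (h + i) = β j ^ h * q.eval (β j) := by
        rw [eval_eq_sum_range, Finset.mul_sum]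
        refine Finset.sum_congr rfl fun i _ => by ring
      rw [e]
      split_ifs with h1
      · rw [h1]
      · rw [hqz j h1, mul_zero]
    rw [Finset.sum_congr rfl fun j _ => this j, ← Finset.sum_filter, Finset.sum_const, nsmul_eq_mul]
  set M : ℝ := ∑ i ∈ Finset.range (q.natDegree + 1), ‖q.coeff i‖ * (C0 * Q ^ i) with hM
  have hbd : ∀ h, H ≤ h → (‖β j0‖ / Q) ^ h ≤ M / ‖q.eval (β j0)‖ := by
    intro h hh
    rw [le_div_iff₀ (norm_pos_iff.2 hq0), div_pow, div_mul_eq_mul_div, div_le_iff₀ (by positivity)]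
    calc ‖β j0‖ ^ h * ‖q.eval (β j0)‖ = 1 * (‖β j0‖ ^ h * ‖q.eval (β j0)‖) := by ring
      _ ≤ n * (‖β j0‖ ^ h * ‖q.eval (β j0)‖) := by
          gcongr
          exact_mod_cast hn1
      _ = ‖(n : ℂ) * (β j0 ^ h * q.eval (β j0))‖ := by simp
      _ = ‖∑ i ∈ Finset.range (q.natDegree + 1), q.coeff i * ∑ j, β j ^ (h + i)‖ := by rw [key]
      _ ≤ ∑ i ∈ Finset.range (q.natDegree + 1), ‖q.coeff i‖ * (C0 * Q ^ (h + i)) := by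
          refine norm_sum_le_of_le _ fun i _ => ?_
          rw [norm_mul]
          gcongr
          exact hb _ (by omega)
      _ = M * Q ^ h := by
          rw [hM, Finset.sum_mul]
          refine Finset.sum_congr rfl fun i _ => by ring
  have h1 : 1 < ‖β j0‖ / Q := (one_lt_div hQ).2 hlt
  have := (tendsto_pow_atTop_atTop_of_one_lt h1).eventually_gt_atTop (M / ‖q.eval (β j0)‖)
  obtain ⟨h, h2, h3⟩ := (this.and (Filter.eventually_ge_atTop H)).exists
  exact absurd (hbd h h3) (not_le.2 h2)

lemma S_one_bound (S : ℕ → ℂ) (α : Fin 4 → ℂ) (hS : ∀ m, 1 ≤ m → S m = - ∑ j, α j ^ m) (Q C0 : ℝ) (hQ : 0 < Q)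
    (H : ℕ) (hb : ∀ h, H ≤ h → ‖S (2 * h)‖ ≤ C0 * Q ^ h) : ‖S 1‖ ≤ 4 * Real.sqrt Q := by
  have h1 : ∀ j, ‖α j‖ ≤ Real.sqrt Q := by
    intro j
    have := power_sum_bound (fun j => α j ^ 2) Q C0 hQ (H + 1) (fun h hh => by
      have h2 := hb h (by omega)
      rw [hS _ (by omega), norm_neg] at h2
      simpa [← pow_mul] using h2) j
    refine Real.le_sqrt_of_sq_le ?_
    simpa using this
  rw [hS 1 le_rfl, norm_neg]
  refine (norm_sum_le _ _).trans ?_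
  refine (Finset.sum_le_sum (g := fun _ => Real.sqrt Q) fun j _ => ?_).trans (by simp)
  simpa using h1 j

open Polynomial

section PN
variable {F : Type*} [Field F]

noncomputable def pn (h : F[X]) : F :=
  ((h %ₘ (X ^ 2 + 1)).coeff 0) ^ 2 + ((h %ₘ (X ^ 2 + 1)).coeff 1) ^ 2

lemma x2_monic : (X ^ 2 + 1 : F[X]).Monic := by monicity!

lemma x2_deg : (X ^ 2 + 1 : F[X]).degree = 2 := by compute_degree!

lemma pn_eq (h A : F[X]) (a b : F) (e : h = (X ^ 2 + 1) * A + (C a + C b * X)) : pn h = a ^ 2 + b ^ 2 := by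
  have : h %ₘ (X ^ 2 + 1) = C a + C b * X := by
    refine (div_modByMonic_unique A _ x2_monic ⟨?_, ?_⟩).2
    · rw [e]; ring
    · rw [x2_deg, add_comm]; exact degree_linear_lt
  rw [pn, this]
  simp [coeff_C]

lemma pn_exists (h : F[X]) : ∃ (A : F[X]) (a b : F), h = (X ^ 2 + 1) * A + (C a + C b * X) := by
  have h1 := modByMonic_add_div h (X ^ 2 + 1 : F[X])
  have h2 : (h %ₘ (X ^ 2 + 1)).degree ≤ 1 := by
    have := degree_modByMonic_lt h (x2_monic (F := F))
    rw [x2_deg] at this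
    exact Order.le_of_lt_succ this
  have h3 := eq_X_add_C_of_degree_le_one h2
  refine ⟨h /ₘ (X ^ 2 + 1), (h %ₘ (X ^ 2 + 1)).coeff 0, (h %ₘ (X ^ 2 + 1)).coeff 1, ?_⟩
  conv_lhs => rw [← h1, h3]
  ring

lemma pn_mul (f g : F[X]) : pn (f * g) = pn f * pn g := by
  obtain ⟨A, a, b, hf⟩ := pn_exists f
  obtain ⟨B, c, d, hg⟩ := pn_exists g
  rw [pn_eq f A a b hf, pn_eq g B c d hg,
    pn_eq (f * g) ((X ^ 2 + 1) * A * B + A * (C c + C d * X) + B * (C a + C b * X) + C (b * d)) (a * c - b * d) (a * d + b * c) ?_]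
  · ring
  · rw [hf, hg]; simp only [map_sub, map_add, map_mul]; ring

lemma pn_map {K : Type*} [Field K] (φ : F →+* K) (f : F[X]) : pn (f.map φ) = φ (pn f) := by
  obtain ⟨A, a, b, hf⟩ := pn_exists f
  rw [pn_eq f A a b hf, pn_eq (f.map φ) (A.map φ) (φ a) (φ b) (by rw [hf]; simp)]
  simp

lemma pn_X_sub_C (r : F) : pn (X - C r) = r ^ 2 + 1 := by
  rw [pn_eq (X - C r) 0 (-r) 1 (by simp; ring)]; ring

lemma pn_add (f g : F[X]) : pn (f + (X ^ 2 + 1) * g) = pn f := by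
  obtain ⟨A, a, b, hf⟩ := pn_exists f
  rw [pn_eq f A a b hf, pn_eq (f + (X ^ 2 + 1) * g) (A + g) a b (by rw [hf]; ring)]

lemma pn_one : pn (1 : F[X]) = 1 := by
  rw [pn_eq 1 0 1 0 (by simp)]; ring

lemma pn_prod {ι : Type*} (s : Finset ι) (r : ι → F) : pn (∏ i ∈ s, (X - C (r i))) = ∏ i ∈ s, (r i ^ 2 + 1) := by
  classical
  induction s using Finset.induction_on with
  | empty => simp [pn_one]
  | insert i s hi ih => rw [Finset.prod_insert hi, Finset.prod_insert hi, pn_mul, ih, pn_X_sub_C]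

lemma cz_prod {ι : Type*} (s : Finset ι) (r : ι → F) :
    (∏ i ∈ s, (X - C (r i))).coeff 0 = (-1) ^ s.card * ∏ i ∈ s, r i := by
  rw [coeff_zero_eq_eval_zero, eval_prod]
  simp [Finset.prod_neg]

lemma co_prod {ι : Type*} (s : Finset ι) (r : ι → F) (hr : ∀ i ∈ s, r i ≠ 0) :
    (∏ i ∈ s, (X - C (r i))).coeff 1 / (∏ i ∈ s, (X - C (r i))).coeff 0 = - ∑ i ∈ s, (r i)⁻¹ := by
  classical
  induction s using Finset.induction_on with
  | empty => simp [coeff_one]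
  | insert i s hi ih =>
    have ih := ih fun j hj => hr j (Finset.mem_insert_of_mem hj)
    have h0 : (∏ i ∈ s, (X - C (r i))).coeff 0 ≠ 0 := by
      rw [cz_prod]
      refine mul_ne_zero (pow_ne_zero _ (neg_ne_zero.2 one_ne_zero)) (Finset.prod_ne_zero_iff.2 fun j hj => hr j (Finset.mem_insert_of_mem hj))
    have hi0 := hr i (Finset.mem_insert_self i s)
    rw [Finset.prod_insert hi, Finset.sum_insert hi, mul_coeff_one, mul_coeff_zero, neg_add, ← ih]
    simp only [coeff_sub, coeff_X_zero, coeff_X_one, coeff_C_zero, coeff_C_succ, zero_sub, sub_zero]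
    field_simp
    ring

/-- The multiplicative function on monic polynomials. -/
noncomputable def Lam (χ : MulChar F ℂ) (ψ : AddChar F ℂ) (u v : F) (h : F[X]) : ℂ :=
  χ ((-1) ^ h.natDegree * pn h / h.coeff 0) * ψ (-(u * h.nextCoeff) - v * (h.coeff 1 / h.coeff 0))

variable (χ : MulChar F ℂ) (ψ : AddChar F ℂ) (u v : F)

lemma Lam_one : Lam χ ψ u v (1 : F[X]) = 1 := by
  simp [Lam, pn_one, coeff_one, nextCoeff]

lemma Lam_zero (h : F[X]) (h0 : h.coeff 0 = 0) : Lam χ ψ u v h = 0 := by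
  rw [Lam, h0, div_zero, MulChar.map_zero, zero_mul]

lemma Lam_mul (f g : F[X]) (hf : f.Monic) (hg : g.Monic) :
    Lam χ ψ u v (f * g) = Lam χ ψ u v f * Lam χ ψ u v g := by
  by_cases hf0 : f.coeff 0 = 0
  · rw [Lam_zero _ _ _ _ f hf0, Lam_zero _ _ _ _ _ (by rw [mul_coeff_zero, hf0, zero_mul]), zero_mul]
  by_cases hg0 : g.coeff 0 = 0
  · rw [Lam_zero _ _ _ _ g hg0, Lam_zero _ _ _ _ _ (by rw [mul_coeff_zero, hg0, mul_zero]), mul_zero]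
  simp only [Lam]
  rw [mul_mul_mul_comm, ← map_mul, ← AddChar.map_add_eq_mul, hf.natDegree_mul hg, pn_mul,
    hf.nextCoeff_mul hg, mul_coeff_zero, mul_coeff_one]
  congr 2
  · rw [pow_add]; field_simp
  · field_simp; ring

variable [Fintype F]

lemma Lam_lc_zero (hψ : ψ ≠ 1) (hu : u ≠ 0) (k : ℕ) (hk : 5 ≤ k) : lc (Lam χ ψ u v) k = 0 := by
  classical
  obtain ⟨x, hx⟩ := AddChar.ne_one_iff.1 hψ
  set c : F := - x / u with hc
  set g : F[X] := C c * X ^ (k - 5) * (X ^ 2 * (X ^ 2 + 1)) with hg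
  have hgd : g.degree < k := by
    have : g.degree ≤ (k - 5 + 4 : ℕ) := by
      rw [hg]; compute_degree
      push_cast; exact le_rfl
    refine this.trans_lt ?_
    exact_mod_cast (by omega)
  have hstep : ∀ h ∈ monicDeg F k, h + g ∈ monicDeg F k ∧ Lam χ ψ u v (h + g) = ψ x * Lam χ ψ u v h := by
    intro h hh
    obtain ⟨h1, h2⟩ := mem_monicDeg.1 hh
    have hdeg : g.degree < h.degree := by rw [degree_eq_natDegree h1.ne_zero, h2]; exact hgd
    have hm : (h + g).Monic := h1.add_of_left hdeg
    have hnd : (h + g).natDegree = k := by rw [natDegree_add_eq_left_of_degree_lt hdeg, h2]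
    refine ⟨mem_monicDeg.2 ⟨hm, hnd⟩, ?_⟩
    have hpn : pn (h + g) = pn h := by
      have : g = (X ^ 2 + 1) * (C c * X ^ (k - 5) * X ^ 2) := by rw [hg]; ring
      rw [this, pn_add]
    have hg' : g = (C c * X ^ (k - 5) * (X ^ 2 + 1)) * X ^ 2 := by rw [hg]; ring
    have h0 : g.coeff 0 = 0 := by rw [hg', coeff_mul_X_pow']; simp
    have h1' : g.coeff 1 = 0 := by rw [hg', coeff_mul_X_pow']; simp
    have hk1 : g.coeff (k - 1) = c := by
      have : g = C c * X ^ (k - 1) + C c * X ^ (k - 3) := by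
        obtain ⟨l, rfl⟩ : ∃ l, k = l + 5 := ⟨k - 5, by omega⟩
        rw [hg, show l + 5 - 1 = l + 4 by omega, show l + 5 - 3 = l + 2 by omega, show l + 5 - 5 = l by omega]
        ring
      rw [this]
      simp [coeff_X_pow]
      intro h; omega
    have hnc : (h + g).nextCoeff = h.nextCoeff + c := by
      rw [nextCoeff_of_natDegree_pos (by omega), nextCoeff_of_natDegree_pos (by omega), hnd, h2, coeff_add, hk1]
    rw [Lam, Lam, hpn, hnc, hnd, h2, coeff_add, coeff_add, h0, h1', add_zero, add_zero]
    have : -(u * (h.nextCoeff + c)) - v * (h.coeff 1 / h.coeff 0) = x + (-(u * h.nextCoeff) - v * (h.coeff 1 / h.coeff 0)) := by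
      rw [hc]; field_simp; ring
    rw [this, AddChar.map_add_eq_mul]; ring
  have himg : (monicDeg F k).image (fun h => h + g) = monicDeg F k := by
    refine Finset.eq_of_subset_of_card_le ?_ ?_
    · intro h hh
      obtain ⟨h', h1, rfl⟩ := Finset.mem_image.1 hh
      exact (hstep h' h1).1
    · rw [Finset.card_image_of_injective _ (add_left_injective g)]
  have hS : lc (Lam χ ψ u v) k = ψ x * lc (Lam χ ψ u v) k := by
    conv_lhs => rw [lc, ← himg, Finset.sum_image (fun a _ b _ h => add_left_injective g h)]
    rw [lc, Finset.mul_sum]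
    exact Finset.sum_congr rfl fun h hh => (hstep h hh).2
  have : (1 - ψ x) * lc (Lam χ ψ u v) k = 0 := by rw [sub_mul, one_mul, ← hS, sub_self]
  rcases mul_eq_zero.1 this with h | h
  · exact absurd (sub_eq_zero.1 h).symm hx
  · exact h
end PN

open Polynomial

section F4
variable {F K : Type*} [Field F] [Fintype F] [Field K] [Fintype K] [Algebra F K]

open UniqueFactorizationMonoid in
lemma galpoly (x : K) : ∃ P : F[X], P.map (algebraMap F K) = ∏ σ : Gal(K/F), (X - C (σ x)) ∧
    P.Monic ∧ P = minpoly F x ^ (Module.finrank F K / (minpoly F x).natDegree) := by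
  classical
  have : Algebra.IsInvariant F K Gal(K/F) :=
    ⟨fun b hb => (IsGalois.mem_range_algebraMap_iff_fixed b).2 hb⟩
  have h1 := Algebra.IsInvariant.charpoly_mem_lifts F K Gal(K/F) x
  rw [MulSemiringAction.charpoly_eq, mem_lifts] at h1
  obtain ⟨P, hP⟩ := h1
  simp only [AlgEquiv.smul_def] at hP
  have hmon : P.Monic := by
    refine (monic_map_iff (f := algebraMap F K)).1 ?_
    rw [hP]; exact monic_prod_X_sub_C _ _
  refine ⟨P, hP, hmon, ?_⟩
  have hne := hmon.ne_zero
  have hxint : IsIntegral F x := IsIntegral.of_finite F x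
  have hfac : ∀ π ∈ normalizedFactors P, π = minpoly F x := by
    intro π hπ
    have hirr := irreducible_of_normalized_factor π hπ
    have hπm : π.Monic := by
      rw [← normalize_normalized_factor π hπ]
      exact monic_normalize hirr.ne_zero
    have hdvd : π.map (algebraMap F K) ∣ P.map (algebraMap F K) :=
      Polynomial.map_dvd _ (dvd_of_mem_normalizedFactors hπ)
    have hsp : (π.map (algebraMap F K)).Splits := by
      refine Splits.of_dvd ?_ (hmon.map _).ne_zero hdvd
      rw [hP]
      exact Splits.prod fun i _ => Splits.X_sub_C _
    obtain ⟨r, hr⟩ := hsp.exists_eval_eq_zero (by rw [degree_map]; exact hirr.degree_pos.ne')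
    have hr2 : (P.map (algebraMap F K)).eval r = 0 := eval_eq_zero_of_dvd_of_eval_eq_zero hdvd hr
    rw [hP, eval_prod, Finset.prod_eq_zero_iff] at hr2
    obtain ⟨σ, _, hσ⟩ := hr2
    simp only [eval_sub, eval_X, eval_C] at hσ
    have hσ : r = σ x := sub_eq_zero.1 hσ
    rw [hσ, eval_map_algebraMap, aeval_algHom_apply σ] at hr
    have hr3 : aeval x π = 0 := by simpa using hr
    exact minpoly.eq_of_irreducible_of_monic hirr hr3 hπm
  have h2 : P = minpoly F x ^ (normalizedFactors P).card := by
    have h3 := prod_normalizedFactors_eq hne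
    rw [hmon.normalize_eq_self, Multiset.eq_replicate_of_mem hfac, Multiset.prod_replicate] at h3
    exact h3.symm
  have hdeg : P.natDegree = Module.finrank F K := by
    rw [← natDegree_map (algebraMap F K), hP, natDegree_finsetProd_X_sub_C_eq_card, Finset.card_univ, ← Nat.card_eq_fintype_card,
      IsGalois.card_aut_eq_finrank]
  have h4 : (normalizedFactors P).card = Module.finrank F K / (minpoly F x).natDegree := by
    have h5 := hdeg
    rw [h2, natDegree_pow] at h5
    rw [← h5, Nat.mul_div_cancel _ (minpoly.natDegree_pos hxint)]
  rw [← h4]; exact h2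

lemma term_eq (χ : MulChar F ℂ) (ψ : AddChar F ℂ) (u v : F) (x : K) :
    χ (Algebra.norm F (x + x⁻¹)) * ψ (Algebra.trace F K (algebraMap F K u * x + algebraMap F K v * x⁻¹)) =
      Lam χ ψ u v (minpoly F x) ^ (Module.finrank F K / (minpoly F x).natDegree) := by
  obtain ⟨P, hP, hmon, hpow⟩ := galpoly (F := F) x
  have hxint : IsIntegral F x := IsIntegral.of_finite F x
  rw [← lam_pow (Lam χ ψ u v) (Lam_one χ ψ u v) (Lam_mul χ ψ u v) _ (minpoly.monic hxint), ← hpow]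
  have hinj := (algebraMap F K).injective
  have hc0 : algebraMap F K (P.coeff 0) = (-1) ^ P.natDegree * ∏ σ : Gal(K/F), σ x := by
    rw [← coeff_map, hP, cz_prod, ← natDegree_map (algebraMap F K), hP, natDegree_finsetProd_X_sub_C_eq_card]
  by_cases hx : x = 0
  · subst hx
    rw [Lam_zero]
    · rw [inv_zero, add_zero, Algebra.norm_zero, MulChar.map_zero, zero_mul]
    · apply hinj
      rw [hc0, map_zero]
      simp
  rw [Lam]
  have hσ0 : ∀ σ : Gal(K/F), σ x ≠ 0 := fun σ => by simpa using hx
  congr 2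
  · apply hinj
    rw [Algebra.norm_eq_prod_automorphisms, map_div₀, map_mul, hc0, ← pn_map, hP, pn_prod, map_pow, map_neg, map_one,
      mul_div_mul_left _ _ (pow_ne_zero _ (neg_ne_zero.2 one_ne_zero)), ← Finset.prod_div_distrib]
    refine Finset.prod_congr rfl fun σ _ => ?_
    rw [map_add, map_inv₀]
    have := hσ0 σ
    field_simp
  · apply hinj
    rw [trace_eq_sum_automorphisms, map_sub, map_neg, map_mul, map_mul, map_div₀, ← nextCoeff_map hinj, ← coeff_map,
      ← coeff_map, hP, co_prod _ _ (fun σ _ => hσ0 σ), prod_X_sub_C_nextCoeff, mul_neg, neg_neg, mul_neg, sub_neg_eq_add,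
      Finset.mul_sum, Finset.mul_sum, ← Finset.sum_add_distrib]
    refine Finset.sum_congr rfl fun σ _ => ?_
    simp

lemma S_eq_lS (m : ℕ) (hm : Module.finrank F K = m) (χ : MulChar F ℂ) (ψ : AddChar F ℂ) (u v : F) :
    ∑ x : K, χ (Algebra.norm F (x + x⁻¹)) * ψ (Algebra.trace F K (algebraMap F K u * x + algebraMap F K v * x⁻¹)) =
      lS (Lam χ ψ u v) m := by
  classical
  have hxint : ∀ x : K, IsIntegral F x := fun x => IsIntegral.of_finite F x
  have hmpos : 0 < m := by rw [← hm]; exact Module.finrank_pos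
  have hmaps : ∀ x ∈ (Finset.univ : Finset K), minpoly F x ∈ (irrUpTo F m).filter (fun π => π.natDegree ∣ m) := by
    intro x _
    have hd : (minpoly F x).natDegree ∣ m := hm ▸ minpoly.degree_dvd (hxint x)
    exact Finset.mem_filter.2 ⟨mem_irrUpTo.2 ⟨minpoly.monic (hxint x), minpoly.irreducible (hxint x), Nat.le_of_dvd hmpos hd⟩, hd⟩
  rw [← Finset.sum_fiberwise_of_maps_to hmaps, lS]
  refine Finset.sum_congr rfl fun π hπ => ?_
  obtain ⟨h1, hd⟩ := Finset.mem_filter.1 hπ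
  obtain ⟨hmon, hirr, -⟩ := mem_irrUpTo.1 h1
  have h2 : ∀ x ∈ Finset.univ.filter (fun x : K => minpoly F x = π),
      χ (Algebra.norm F (x + x⁻¹)) * ψ (Algebra.trace F K (algebraMap F K u * x + algebraMap F K v * x⁻¹)) =
      Lam χ ψ u v π ^ (m / π.natDegree) := by
    intro x hx
    rw [term_eq, (Finset.mem_filter.1 hx).2, hm]
  rw [Finset.sum_congr rfl h2, Finset.sum_const, nsmul_eq_mul]
  congr 2
  have hsep : π.Separable := PerfectField.separable_of_irreducible hirr
  have hcardK : Nat.card F ^ m = Fintype.card K := by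
    rw [← hm, Module.card_eq_pow_finrank (K := F) (V := K), Nat.card_eq_fintype_card]
  have hsp : (π.map (algebraMap F K)).Splits := by
    have h3 := (hirr.natDegree_dvd_iff_dvd_X_pow_card_pow_sub_X (n := m)).1 hd
    rw [hcardK] at h3
    have h4 := (FiniteField.isSplittingField_sub K F).splits
    refine h4.of_dvd ?_ (Polynomial.map_dvd _ h3)
    simp only [Polynomial.map_sub, Polynomial.map_pow, map_X]
    exact FiniteField.X_pow_card_sub_X_ne_zero K Fintype.one_lt_card
  rw [← card_rootSet_eq_natDegree hsep hsp, ← Set.toFinset_card]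
  congr 1
  ext x
  simp only [Finset.mem_filter, Finset.mem_univ, true_and, Set.mem_toFinset, mem_rootSet]
  constructor
  · rintro rfl
    exact ⟨hirr.ne_zero, minpoly.aeval F x⟩
  · rintro ⟨_, h⟩
    exact (minpoly.eq_of_irreducible_of_monic hirr h hmon).symm
end F4

/-- Weil bound over the base field. -/
theorem weil_u (F : Type*) [Field F] [Fintype F] (χ : MulChar F ℂ) (ψ : AddChar F ℂ) (hψ : ψ ≠ 1) (u v : F) (hu : u ≠ 0) :
    ‖∑ x : F, χ (x + x⁻¹) * ψ (u * x + v * x⁻¹)‖ ≤ 4 * Real.sqrt (Fintype.card F) := by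
  classical
  obtain ⟨α, hα⟩ := newton_solve (lc (Lam χ ψ u v)) (lS (Lam χ ψ u v))
    (by
      have : monicDeg F 0 = {1} := by
        ext h
        simp only [mem_monicDeg, Finset.mem_singleton]
        constructor
        · rintro ⟨h1, h2⟩; exact h1.natDegree_eq_zero.1 h2
        · rintro rfl; simp
      rw [lc, this, Finset.sum_singleton, Lam_one])
    (Lam_lc_zero χ ψ u v hψ hu)
    (newton_id _ (Lam_one χ ψ u v) (Lam_mul χ ψ u v))
  have h1 := S_eq_lS (F := F) (K := F) 1 (by simp) χ ψ u v
  simp only [Algebra.norm_self, Algebra.trace_self, MonoidHom.id_apply, LinearMap.id_apply, Algebra.algebraMap_self, RingHom.id_apply] at h1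
  rw [h1]
  obtain ⟨p, hp⟩ := CharP.exists F
  have : Fact p.Prime := ⟨CharP.char_is_prime F p⟩
  set κ := 2 * (Fintype.card F) ^ 3 with hκ
  have hQ1 : 1 < Fintype.card F := Fintype.one_lt_card
  refine S_one_bound _ α hα (Fintype.card F) (2 * κ + 4) (by exact_mod_cast Fintype.card_pos) (κ ^ 2 + 3 * κ + 2) ?_
  intro h hh
  have hpos : 0 < 2 * h := by omega
  have : NeZero (2 * h) := ⟨hpos.ne'⟩
  let _ : Fintype (FiniteField.Extension F p (2 * h)) := Fintype.ofFinite _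
  have hfin : Module.finrank F (FiniteField.Extension F p (2 * h)) = 2 * h := FiniteField.finrank_extension F p (2 * h)
  rw [← S_eq_lS (K := FiniteField.Extension F p (2 * h)) (2 * h) hfin]
  refine ext_bound F (FiniteField.Extension F p (2 * h)) h ?_ _ _ (by simpa using hu) χ ψ hψ κ hκ ?_
  · have := Module.card_eq_pow_finrank (K := F) (V := FiniteField.Extension F p (2 * h))
    rwa [hfin] at this
  · have := Nat.lt_pow_self (n := h) hQ1
    omega

open Polynomial

theorem jac_norm (F : Type*) [Field F] [Fintype F] (χ φ : MulChar F ℂ) (h : χ ≠ 1 ∨ φ ≠ 1) :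
    ‖jacobiSum χ φ‖ ≤ Real.sqrt (Fintype.card F) := by
  have hQ : (1 : ℝ) ≤ Real.sqrt (Fintype.card F) := by
    rw [Real.one_le_sqrt]
    exact_mod_cast Fintype.card_pos
  by_cases h1 : χ = 1
  · have h2 : φ ≠ 1 := by tauto
    rw [h1, jacobiSum_one_nontrivial h2]; simpa using hQ
  by_cases h2 : φ = 1
  · rw [h2, jacobiSum_comm, jacobiSum_one_nontrivial h1]; simpa using hQ
  by_cases h3 : χ * φ = 1
  · have : φ = χ⁻¹ := (inv_eq_of_mul_eq_one_right h3).symm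
    rw [this, jacobiSum_nontrivial_inv h1, norm_neg]
    exact (mc_norm_le χ _).trans hQ
  have hc : ringChar ℂ ≠ ringChar F := by
    rw [ringChar.eq_zero]
    intro h0
    have := CharP.char_ne_zero_of_finite F (ringChar F)
    exact this h0.symm
  have h4 := jacobiSum_mul_jacobiSum_inv hc h1 h2 h3
  have h5 : jacobiSum χ⁻¹ φ⁻¹ = star (jacobiSum χ φ) := by
    simp only [jacobiSum, star_sum, star_mul', MulChar.star_apply']
  rw [h5] at h4
  have h6 : ‖jacobiSum χ φ‖ ^ 2 = Fintype.card F := by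
    have := congrArg norm h4
    rw [norm_mul, norm_star] at this
    simpa [sq] using this
  exact Real.le_sqrt_of_sq_le h6.le

theorem mc_sqrt (F : Type*) [Field F] [Fintype F] (hF : ringChar F ≠ 2) (χ : MulChar F ℂ)
    (h : χ (-1) = 1) : ∃ ρ : MulChar F ℂ, ρ * ρ = χ := by
  classical
  obtain ⟨g, hg⟩ := IsCyclic.exists_generator (α := Fˣ)
  obtain ⟨w, hw⟩ := IsAlgClosed.exists_pow_nat_eq (χ g) (n := 2) (by norm_num)
  have hodd := FiniteField.odd_card_of_char_ne_two hF
  have hcu := Fintype.card_eq_card_units_add_one (α := F)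
  obtain ⟨m, hm⟩ : ∃ m, Fintype.card Fˣ = 2 * m := ⟨Fintype.card F / 2, by omega⟩
  have hgm : ((g : F) ^ m) ^ 2 = 1 := by
    rw [← pow_mul, mul_comm m 2, ← hm]
    have := pow_card_eq_one (x := g)
    rw [← Units.val_pow_eq_pow_val, this, Units.val_one]
  have hχm : χ g ^ m = 1 := by
    rw [← map_pow]
    rcases mul_self_eq_one_iff.mp ((sq _).symm.trans hgm) with h1 | h1
    · rw [h1, map_one]
    · rw [h1, h]
  have hwp : w ^ Fintype.card Fˣ = 1 := by
    rw [hm, pow_mul, hw, hχm]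
  have hw0 : w ≠ 0 := by
    rintro rfl
    rw [zero_pow Fintype.card_ne_zero] at hwp
    exact zero_ne_one hwp
  have hmem : Units.mk0 w hw0 ∈ rootsOfUnity (Fintype.card Fˣ) ℂ := by
    rw [mem_rootsOfUnity]
    ext; simpa using hwp
  refine ⟨MulChar.ofRootOfUnity hmem hg, ?_⟩
  rw [MulChar.eq_iff hg]
  rw [MulChar.mul_apply, MulChar.ofRootOfUnity_spec]
  simp [← sq, hw]

theorem weil_v (F : Type*) [Field F] [Fintype F] (χ : MulChar F ℂ) (ψ : AddChar F ℂ)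
    (hψ : ψ ≠ 1) (u v : F) (hv : v ≠ 0) :
    ‖∑ x : F, χ (x + x⁻¹) * ψ (u * x + v * x⁻¹)‖ ≤ 4 * Real.sqrt (Fintype.card F) := by
  have := weil_u F χ ψ hψ v u hv
  rw [← Equiv.sum_comp ((inv_involutive (G := F)).toPerm _)]
  simp only [Function.Involutive.coe_toPerm, inv_inv]
  simp only [add_comm] at this ⊢
  exact this

theorem jac_add (F : Type*) [Field F] [Fintype F] (χ φ : MulChar F ℂ) (h : χ ≠ 1 ∨ φ ≠ 1) :
    ‖∑ w : F, χ w * φ (w + 1)‖ ≤ Real.sqrt (Fintype.card F) := by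
  have h1 : ∑ w : F, χ w * φ (w + 1) = χ (-1) * jacobiSum χ φ := by
    rw [jacobiSum, Finset.mul_sum, ← Equiv.sum_comp (Equiv.neg F)]
    refine Finset.sum_congr rfl fun x _ => ?_
    have : χ (-x) = χ (-1) * χ x := by rw [← map_mul]; simp
    simp only [Equiv.neg_apply, this]
    rw [mul_assoc]; congr 3; ring
  rw [h1, norm_mul]
  have := jac_norm F χ φ h
  nlinarith [mc_norm_le χ (-1), norm_nonneg (jacobiSum χ φ), norm_nonneg (χ (-1))]

theorem zero_expand (F : Type*) [Field F] (χ : MulChar F ℂ) (x : F) :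
    χ (x + x⁻¹) = χ⁻¹ x * χ (x ^ 2 + 1) := by
  by_cases hx : x = 0
  · subst hx
    rw [inv_zero, add_zero, χ.map_zero, MulChar.map_zero, zero_mul]
  · rw [MulChar.inv_apply', ← map_mul]; congr 1; field_simp

theorem weil_zero (F : Type*) [Field F] [Fintype F] (χ : MulChar F ℂ) (hχ : χ ≠ 1) :
    ‖∑ x : F, χ (x + x⁻¹)‖ ≤ 4 * Real.sqrt (Fintype.card F) := by
  classical
  have hpos := Real.sqrt_nonneg (Fintype.card F : ℝ)
  by_cases hF : ringChar F = 2
  · have : CharP F 2 := ringChar.of_eq hF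
    have h1 : ∑ x : F, χ (x + x⁻¹) = ∑ w : F, χ⁻¹ w * (χ * χ) (w + 1) := by
      refine Finset.sum_congr rfl fun x _ => ?_
      rw [zero_expand, MulChar.mul_apply, ← map_mul]
      congr 2
      have h2 : (2 : F) = 0 := CharTwo.two_eq_zero
      linear_combination (-x) * h2
    rw [h1]
    have := jac_add F χ⁻¹ (χ * χ) (Or.inl (inv_ne_one.mpr hχ))
    linarith
  have hsq : χ (-1) * χ (-1) = 1 := by rw [← map_mul]; simp
  rcases mul_self_eq_one_iff.mp hsq with h1 | h1
  · obtain ⟨ρ, hρ⟩ := mc_sqrt F hF χ h1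
    let η : MulChar F ℂ := (quadraticChar F).ringHomComp (Int.castRingHom ℂ)
    have h2 : ∑ x : F, χ (x + x⁻¹) = ∑ w : F, ρ⁻¹ w * χ (w + 1) +
        ∑ w : F, (ρ⁻¹ * η) w * χ (w + 1) := by
      rw [← Finset.sum_add_distrib]
      have h3 : ∀ x : F, χ (x + x⁻¹) = ρ⁻¹ (x ^ 2) * χ (x ^ 2 + 1) := by
        intro x
        rw [zero_expand, ← hρ, mul_inv, MulChar.mul_apply, ← map_mul, ← sq]
      simp_rw [h3]
      rw [← Finset.sum_fiberwise_of_maps_to (g := fun x : F => x ^ 2) (t := Finset.univ)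
        (by simp)]
      refine Finset.sum_congr rfl fun w _ => ?_
      rw [Finset.sum_congr rfl (g := fun _ => ρ⁻¹ w * χ (w + 1))]
      · rw [Finset.sum_const, nsmul_eq_mul]
        have h4 := quadraticChar_card_sqrts hF w
        have h5 : (((Finset.univ.filter fun x : F => x ^ 2 = w).card : ℤ) : ℂ) = η w + 1 := by
          rw [show (Finset.univ.filter fun x : F => x ^ 2 = w).card = _ from ?_, h4]
          · simp [η]
          · congr 1; ext; simp
        rw [Int.cast_natCast] at h5
        rw [h5, MulChar.mul_apply]; ring
      · intro x hx
        simp only [Finset.mem_filter] at hx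
        rw [hx.2]
    rw [h2]
    have h6 := jac_add F ρ⁻¹ χ (Or.inr hχ)
    have h7 := jac_add F (ρ⁻¹ * η) χ (Or.inr hχ)
    refine (norm_add_le _ _).trans ?_
    linarith
  · have h2 : ∑ x : F, χ (x + x⁻¹) = - ∑ x : F, χ (x + x⁻¹) := by
      conv_lhs => rw [← Equiv.sum_comp (Equiv.neg F)]
      rw [← Finset.sum_neg_distrib]
      refine Finset.sum_congr rfl fun x _ => ?_
      have : χ (-(x + x⁻¹)) = χ (-1) * χ (x + x⁻¹) := by rw [← map_mul]; simp
      rw [h1] at this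
      simp only [Equiv.neg_apply, inv_neg]
      rw [← neg_add, this]; ring
    have h3 : ∑ x : F, χ (x + x⁻¹) = 0 := by
      linear_combination (1 / 2 : ℂ) * h2
    rw [h3, norm_zero]; positivity

/-- Combined bound. -/
theorem weil_all (F : Type*) [Field F] [Fintype F] (χ : MulChar F ℂ) (ψ : AddChar F ℂ)
    (hψ : ψ ≠ 1) (u v : F) (h : χ ≠ 1 ∨ u ≠ 0 ∨ v ≠ 0) :
    ‖∑ x : F, χ (x + x⁻¹) * ψ (u * x + v * x⁻¹)‖ ≤ 4 * Real.sqrt (Fintype.card F) := by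
  by_cases hu : u = 0
  · by_cases hv : v = 0
    · have hχ : χ ≠ 1 := by tauto
      have := weil_zero F χ hχ
      simpa [hu, hv] using this
    · exact weil_v F χ ψ hψ u v hv
  · exact weil_u F χ ψ hψ u v hu

open Polynomial

open Classical in
/-- Elements with prescribed traces for which `ξ + ξ⁻¹` is nonzero. -/
noncomputable def XX (F E : Type*) [Field F] [Field E] [Fintype E] [Algebra F E] (a b : F) :
    Finset E :=
  Finset.univ.filter fun ξ => ξ + ξ⁻¹ ≠ 0 ∧ Algebra.trace F E ξ = a ∧ Algebra.trace F E ξ⁻¹ = b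

theorem XX_avg (F E : Type*) [Field F] [Fintype F] [Field E] [Fintype E] [Algebra F E] (a b : F)
    (ψ : AddChar F ℂ) (hψ : ψ ≠ 1) (χ : MulChar E ℂ) :
    (Fintype.card F : ℂ) ^ 2 * ∑ ξ ∈ XX F E a b, χ (ξ + ξ⁻¹) =
      ∑ u : F, ∑ v : F, ψ (-(u * a) - v * b) *
        ∑ x : E, χ (x + x⁻¹) * (ψ.compAddMonoidHom (Algebra.trace F E).toAddMonoidHom)
          (algebraMap F E u * x + algebraMap F E v * x⁻¹) := by
  classical
  have hp : ψ.IsPrimitive := AddChar.IsPrimitive.of_ne_one hψ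
  have hstep : ∀ (u v : F) (x : E), ψ (-(u * a) - v * b) * (χ (x + x⁻¹) *
      (ψ.compAddMonoidHom (Algebra.trace F E).toAddMonoidHom)
          (algebraMap F E u * x + algebraMap F E v * x⁻¹)) =
      χ (x + x⁻¹) * (ψ (u * (Algebra.trace F E x - a)) * ψ (v * (Algebra.trace F E x⁻¹ - b))) := by
    intro u v x
    have : (ψ.compAddMonoidHom (Algebra.trace F E).toAddMonoidHom)
          (algebraMap F E u * x + algebraMap F E v * x⁻¹) =
        ψ (u * Algebra.trace F E x + v * Algebra.trace F E x⁻¹) := by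
      simp only [AddChar.compAddMonoidHom_apply, LinearMap.toAddMonoidHom_coe, map_add,
        ← Algebra.smul_def, map_smul, smul_eq_mul]
    rw [this, mul_left_comm, ← AddChar.map_add_eq_mul, ← AddChar.map_add_eq_mul]
    congr 2; ring
  simp_rw [Finset.mul_sum, hstep]
  have hswap : ∀ g : F → F → E → ℂ, ∑ u, ∑ v, ∑ x, g u v x = ∑ x, ∑ u, ∑ v, g u v x := by
    intro g
    rw [Finset.sum_congr rfl fun u _ => Finset.sum_comm]
    exact Finset.sum_comm
  rw [hswap]
  simp_rw [← Finset.mul_sum, AddChar.sum_mulShift _ hp, ← Finset.sum_mul,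
    AddChar.sum_mulShift _ hp]
  unfold XX
  rw [Finset.sum_filter, Finset.mul_sum]
  refine Finset.sum_congr rfl fun x _ => ?_
  by_cases h0 : x + x⁻¹ = 0
  · rw [h0, χ.map_zero]; simp
  by_cases h1 : Algebra.trace F E x = a <;> by_cases h2 : Algebra.trace F E x⁻¹ = b
  · simp [h0, h1, h2]; ring
  all_goals simp [h1, h2, sub_eq_zero]

theorem psiE_ne (F E : Type*) [Field F] [Fintype F] [Field E] [Fintype E] [Algebra F E]
    (ψ : AddChar F ℂ) (hψ : ψ ≠ 1) :
    ψ.compAddMonoidHom (Algebra.trace F E).toAddMonoidHom ≠ 1 := by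
  obtain ⟨c, hc⟩ := AddChar.ne_one_iff.mp hψ
  have : Module.Finite F E := Module.Finite.of_finite
  obtain ⟨x, hx⟩ := Algebra.trace_surjective F E c
  refine AddChar.ne_one_iff.mpr ⟨x, ?_⟩
  simpa [AddChar.compAddMonoidHom_apply, hx] using hc

theorem exists_psi (F : Type*) [Field F] [Fintype F] : ∃ ψ : AddChar F ℂ, ψ ≠ 1 := by
  obtain ⟨ψ, h⟩ := AddChar.exists_apply_ne_zero.mpr (one_ne_zero (α := F))
  exact ⟨ψ, AddChar.ne_one_iff.mpr ⟨1, h⟩⟩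

theorem XX_bound (F E : Type*) [Field F] [Fintype F] [Field E] [Fintype E] [Algebra F E] (a b : F)
    (χ : MulChar E ℂ) (hχ : χ ≠ 1) :
    ‖∑ ξ ∈ XX F E a b, χ (ξ + ξ⁻¹)‖ ≤ 4 * Real.sqrt (Fintype.card E) := by
  obtain ⟨ψ, hψ⟩ := exists_psi F
  have h := congrArg norm (XX_avg F E a b ψ hψ χ)
  have h2 : ‖∑ u : F, ∑ v : F, ψ (-(u * a) - v * b) *
        ∑ x : E, χ (x + x⁻¹) * (ψ.compAddMonoidHom (Algebra.trace F E).toAddMonoidHom)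
          (algebraMap F E u * x + algebraMap F E v * x⁻¹)‖ ≤
      ∑ u : F, ∑ v : F, 4 * Real.sqrt (Fintype.card E) := by
    refine norm_sum_le_of_le _ fun u _ => norm_sum_le_of_le _ fun v _ => ?_
    rw [norm_mul, ac_norm, one_mul]
    exact weil_all E χ _ (psiE_ne F E ψ hψ) _ _ (Or.inl hχ)
  rw [← h, norm_mul] at h2
  simp only [Finset.sum_const, Finset.card_univ, nsmul_eq_mul, norm_pow, Complex.norm_natCast] at h2
  have hq : (0 : ℝ) < Fintype.card F := by exact_mod_cast Fintype.card_pos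
  rw [← mul_assoc, ← sq] at h2
  exact le_of_mul_le_mul_left h2 (by positivity)

theorem XX_card (F E : Type*) [Field F] [Fintype F] [Field E] [Fintype E] [Algebra F E] (a b : F) :
    (Fintype.card E : ℝ) / (Fintype.card F : ℝ) ^ 2 - 4 * Real.sqrt (Fintype.card E) ≤
      (XX F E a b).card := by
  classical
  obtain ⟨ψ, hψ⟩ := exists_psi F
  have h := XX_avg F E a b ψ hψ 1
  set H : ℝ := 4 * Real.sqrt (Fintype.card E) with hH
  have hH3 : 3 ≤ H := by
    have : (1 : ℝ) ≤ Real.sqrt (Fintype.card E) := by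
      rw [Real.one_le_sqrt]
      exact_mod_cast Fintype.card_pos
    linarith
  have h1 : ∑ ξ ∈ XX F E a b, (1 : MulChar E ℂ) (ξ + ξ⁻¹) = (XX F E a b).card := by
    rw [Finset.card_eq_sum_ones, Nat.cast_sum]
    refine Finset.sum_congr rfl fun x hx => ?_
    have : x + x⁻¹ ≠ 0 := by
      unfold XX at hx
      exact (Finset.mem_filter.mp hx).2.1
    rw [MulChar.one_apply (isUnit_iff_ne_zero.mpr this)]; simp
  rw [h1, ← Fintype.sum_prod_type'] at h
  rw [← Finset.add_sum_erase _ _ (Finset.mem_univ ((0, 0) : F × F))] at h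
  set R : ℂ := ∑ x ∈ Finset.univ.erase ((0, 0) : F × F), ψ (-(x.1 * a) - x.2 * b) *
        ∑ y : E, (1 : MulChar E ℂ) (y + y⁻¹) *
          (ψ.compAddMonoidHom (Algebra.trace F E).toAddMonoidHom)
          (algebraMap F E x.1 * y + algebraMap F E x.2 * y⁻¹) with hR
  have hRb : ‖R‖ ≤ ((Fintype.card F : ℝ) ^ 2 - 1) * H := by
    have : ‖R‖ ≤ ∑ x ∈ Finset.univ.erase ((0, 0) : F × F), H := by
      refine norm_sum_le_of_le _ fun u hu => ?_
      rw [norm_mul, ac_norm, one_mul]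
      refine weil_all E 1 _ (psiE_ne F E ψ hψ) _ _ (Or.inr ?_)
      have := (Finset.mem_erase.mp hu).1
      by_contra hcon
      push Not at hcon
      simp only [map_eq_zero] at hcon
      exact this (Prod.ext hcon.1 hcon.2)
    refine this.trans (le_of_eq ?_)
    rw [Finset.sum_const, nsmul_eq_mul, Finset.card_erase_of_mem (Finset.mem_univ _),
      Finset.card_univ, Fintype.card_prod, Nat.cast_sub]
    · push_cast; ring
    · exact Nat.mul_pos Fintype.card_pos Fintype.card_pos
  have hM : (∑ y : E, (1 : MulChar E ℂ) (y + y⁻¹)) =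
      ((Fintype.card E : ℝ) - (Finset.univ.filter fun x : E => x + x⁻¹ = 0).card : ℝ) := by
    have : ∀ y : E, (1 : MulChar E ℂ) (y + y⁻¹) = 1 - if y + y⁻¹ = 0 then 1 else 0 := by
      intro y
      by_cases hy : y + y⁻¹ = 0
      · rw [hy, MulChar.map_zero]; simp
      · rw [MulChar.one_apply (isUnit_iff_ne_zero.mpr hy)]; simp [hy]
    simp_rw [this, Finset.sum_sub_distrib]
    simp
  have h0 : ψ (-((0 : F) * a) - 0 * b) *
        ∑ y : E, (1 : MulChar E ℂ) (y + y⁻¹) *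
          (ψ.compAddMonoidHom (Algebra.trace F E).toAddMonoidHom)
          (algebraMap F E 0 * y + algebraMap F E 0 * y⁻¹) =
      ∑ y : E, (1 : MulChar E ℂ) (y + y⁻¹) := by
    simp
  have h' : (Fintype.card F : ℂ) ^ 2 * (XX F E a b).card =
      (∑ y : E, (1 : MulChar E ℂ) (y + y⁻¹)) + R := by
    rw [h]; congr 1
  rw [hM] at h'
  have hre := congrArg Complex.re h'
  rw [Complex.add_re, Complex.ofReal_re] at hre
  have hl : ((Fintype.card F : ℂ) ^ 2 * (XX F E a b).card).re =
      (Fintype.card F : ℝ) ^ 2 * (XX F E a b).card := by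
    rw [← Complex.ofReal_re ((Fintype.card F : ℝ) ^ 2 * (XX F E a b).card)]
    push_cast; rfl
  rw [hl] at hre
  have hbad : ((Finset.univ.filter fun x : E => x + x⁻¹ = 0).card : ℝ) ≤ 3 := by
    exact_mod_cast bad_card E
  have hRr : -‖R‖ ≤ R.re := (abs_le.mp (Complex.abs_re_le_norm R)).1
  have hq : (0 : ℝ) < Fintype.card F := by exact_mod_cast Fintype.card_pos
  rw [sub_le_iff_le_add, div_le_iff₀ (by positivity)]
  nlinarith

open Polynomial

theorem exists_chi (E : Type*) [Field E] [Fintype E] (r : ℕ) (hr : r.Prime)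
    (hd : r ∣ Fintype.card E - 1) : ∃ χ : MulChar E ℂ, orderOf χ = r :=
  MulChar.exists_mulChar_orderOf E hd (Complex.isPrimitiveRoot_exp r hr.ne_zero)

/-- Indicator of `χ y ≠ 1`, in character form. -/
theorem ind_char (E : Type*) [Field E] [Fintype E] (r : ℕ) (hr : r.Prime)
    (χ : MulChar E ℂ) (ho : orderOf χ = r) (y : E) (hy : y ≠ 0) :
    (((if χ y = 1 then (0 : ℝ) else 1) / (1 - 1 / (r : ℝ)) - 1 : ℝ) : ℂ) =
      -(1 / ((r : ℂ) - 1)) * ∑ j ∈ Finset.Ico 1 r, (χ ^ j) y := by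
  have hr2 : (2 : ℝ) ≤ r := by exact_mod_cast hr.two_le
  have hr0 : (r : ℂ) ≠ 0 := by exact_mod_cast hr.ne_zero
  have hr1 : (r : ℂ) - 1 ≠ 0 := by
    rw [sub_ne_zero]; exact_mod_cast hr.one_lt.ne'
  have h1 : ∀ j ∈ Finset.Ico 1 r, (χ ^ j) y = χ y ^ j := fun j hj =>
    MulChar.pow_apply' χ (by have := (Finset.mem_Ico.mp hj).1; omega) y
  rw [Finset.sum_congr rfl h1]
  have h2 : ∑ j ∈ Finset.Ico 1 r, χ y ^ j = ∑ j ∈ Finset.range r, χ y ^ j - 1 := by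
    rw [Finset.range_eq_Ico, Finset.sum_eq_sum_Ico_succ_bot hr.pos]; simp
  rw [h2]
  by_cases h : χ y = 1
  · simp only [h, if_true, one_pow, Finset.sum_const, Finset.card_range, nsmul_eq_mul]
    push_cast; field_simp; simp
  · have h3 : χ y ^ r = 1 := by
      rw [← MulChar.pow_apply' χ hr.ne_zero, ← ho, pow_orderOf_eq_one,
        MulChar.one_apply (isUnit_iff_ne_zero.mpr hy)]
    have h4 : ∑ j ∈ Finset.range r, χ y ^ j = 0 := by
      rw [geom_sum_eq h, h3]; simp
    rw [h4]
    simp only [h, if_false]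
    push_cast
    field_simp
    ring

theorem char_prod_bound (F E : Type*) [Field F] [Fintype F] [Field E] [Fintype E] [Algebra F E]
    (a b : F) (c : ℕ → MulChar E ℂ) (B : Finset ℕ) :
    ∀ (_ : ∀ r ∈ B, r.Prime) (_ : ∀ r ∈ B, orderOf (c r) = r)
      (ρ : MulChar E ℂ) (_ : ∀ r ∈ B, ¬ r ∣ orderOf ρ) (_ : ρ ≠ 1 ∨ B.Nonempty),
      ‖∑ ξ ∈ XX F E a b, ρ (ξ + ξ⁻¹) * ∏ r ∈ B, (-(1 / ((r : ℂ) - 1)) *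
        ∑ j ∈ Finset.Ico 1 r, (c r ^ j) (ξ + ξ⁻¹))‖ ≤ 4 * Real.sqrt (Fintype.card E) := by
  classical
  induction B using Finset.induction_on with
  | empty =>
    intro _ _ ρ _ h
    simp only [Finset.prod_empty, mul_one]
    exact XX_bound F E a b ρ (by simpa using h)
  | insert s B hs ih =>
    intro hp ho ρ hd _
    have hsp := hp s (Finset.mem_insert_self _ _)
    have hso := ho s (Finset.mem_insert_self _ _)
    have hs1 : (0 : ℝ) < (s : ℝ) - 1 := by
      have : (1 : ℝ) < s := by exact_mod_cast hsp.one_lt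
      linarith
    have e1 : ∑ ξ ∈ XX F E a b, ρ (ξ + ξ⁻¹) * ∏ r ∈ insert s B, (-(1 / ((r : ℂ) - 1)) *
        ∑ j ∈ Finset.Ico 1 r, (c r ^ j) (ξ + ξ⁻¹)) =
        -(1 / ((s : ℂ) - 1)) * ∑ j ∈ Finset.Ico 1 s, ∑ ξ ∈ XX F E a b,
          (ρ * c s ^ j) (ξ + ξ⁻¹) * ∏ r ∈ B, (-(1 / ((r : ℂ) - 1)) *
        ∑ j ∈ Finset.Ico 1 r, (c r ^ j) (ξ + ξ⁻¹)) := by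
      rw [Finset.sum_comm, Finset.mul_sum]
      refine Finset.sum_congr rfl fun ξ _ => ?_
      rw [Finset.prod_insert hs, ← Finset.sum_mul]
      simp only [MulChar.mul_apply]
      rw [← Finset.mul_sum]; ring
    have e2 : ∀ j ∈ Finset.Ico 1 s, ‖∑ ξ ∈ XX F E a b,
          (ρ * c s ^ j) (ξ + ξ⁻¹) * ∏ r ∈ B, (-(1 / ((r : ℂ) - 1)) *
        ∑ j ∈ Finset.Ico 1 r, (c r ^ j) (ξ + ξ⁻¹))‖ ≤ 4 * Real.sqrt (Fintype.card E) := by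
      intro j hj
      rw [Finset.mem_Ico] at hj
      have hoj : orderOf (c s ^ j) = s := by
        rw [Nat.Coprime.orderOf_pow, hso]
        rw [hso]
        exact (Nat.coprime_of_lt_prime (by omega) hj.2 hsp)
      refine ih (fun r h => hp r (Finset.mem_insert_of_mem h))
        (fun r h => ho r (Finset.mem_insert_of_mem h)) _ ?_ (Or.inl ?_)
      · intro r h hdiv
        have hrp := hp r (Finset.mem_insert_of_mem h)
        have h1 := hdiv.trans (Commute.orderOf_mul_dvd_lcm (Commute.all ρ (c s ^ j)))
        rw [hoj] at h1
        rcases (Nat.Prime.dvd_mul hrp).mp (h1.trans (Nat.lcm_dvd_mul _ _)) with h2 | h2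
        · exact hd r (Finset.mem_insert_of_mem h) h2
        · rw [(Nat.prime_dvd_prime_iff_eq hrp hsp).mp h2] at h
          exact hs h
      · intro h1
        have h2 : ρ = (c s ^ j)⁻¹ := eq_inv_of_mul_eq_one_left h1
        apply hd s (Finset.mem_insert_self _ _)
        rw [h2, orderOf_inv, hoj]
    rw [e1, norm_mul]
    have e3 := norm_sum_le_of_le _ e2
    rw [Finset.sum_const, nsmul_eq_mul, Nat.card_Ico, Nat.cast_sub hsp.one_le, Nat.cast_one] at e3
    have e4 : ‖-(1 / ((s : ℂ) - 1))‖ = 1 / ((s : ℝ) - 1) := by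
      rw [norm_neg, norm_div, norm_one]
      congr 1
      have : ((s : ℂ) - 1) = (((s : ℝ) - 1 : ℝ) : ℂ) := by push_cast; rfl
      rw [this, Complex.norm_real, Real.norm_of_nonneg hs1.le]
    rw [e4, div_mul_eq_mul_div, one_mul, div_le_iff₀ hs1]
    linarith

theorem prim_of_char (E : Type*) [Field E] [Fintype E] (c : ℕ → MulChar E ℂ)
    (hc : ∀ r ∈ (Fintype.card E - 1).primeFactors, orderOf (c r) = r) (y : E) (hy : y ≠ 0)
    (h : ∀ r ∈ (Fintype.card E - 1).primeFactors, c r y ≠ 1) :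
    orderOf y = Fintype.card E - 1 := by
  classical
  have hcard : 0 < Fintype.card E - 1 := by
    have := Fintype.one_lt_card (α := E); omega
  refine orderOf_eq_of_pow_and_pow_div_prime hcard (FiniteField.pow_card_sub_one_eq_one y hy) ?_
  intro r hr hd hpow
  apply h r (Nat.mem_primeFactors.mpr ⟨hr, hd, hcard.ne'⟩)
  obtain ⟨g, hg⟩ := IsCyclic.exists_generator (α := Eˣ)
  obtain ⟨i, hi⟩ := (mem_powers_iff_mem_zpowers.mpr (hg (Units.mk0 y hy)))
  have hi' : g ^ i = Units.mk0 y hy := hi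
  have hog : orderOf g = Fintype.card E - 1 := by
    rw [orderOf_eq_card_of_forall_mem_zpowers hg, Nat.card_eq_fintype_card, Fintype.card_units]
  obtain ⟨m, hm⟩ := hd
  have hm' : (Fintype.card E - 1) / r = m := by rw [hm]; exact Nat.mul_div_cancel_left _ hr.pos
  rw [hm'] at hpow
  have h1 : g ^ (i * m) = 1 := by
    rw [pow_mul, hi']; ext; simpa using hpow
  have h2 := orderOf_dvd_of_pow_eq_one h1
  rw [hog, hm] at h2
  have hmpos : 0 < m := by
    rcases Nat.eq_zero_or_pos m with h0 | h0
    · rw [h0] at hm; omega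
    · exact h0
  obtain ⟨e, he⟩ := Nat.dvd_of_mul_dvd_mul_right hmpos h2
  have hy2 : y = ((g ^ e : Eˣ) : E) ^ r := by
    have := congrArg Units.val hi'
    rw [Units.val_mk0] at this
    rw [← this, he, mul_comm, pow_mul, Units.val_pow_eq_pow_val]
  rw [hy2, map_pow, ← MulChar.pow_apply' _ hr.ne_zero]
  have := hc r (Nat.mem_primeFactors.mpr ⟨hr, ⟨m, hm⟩, hcard.ne'⟩)
  conv_lhs => rw [show c r ^ r = 1 by rw [← this, this]; nth_rewrite 2 [← this]; exact pow_orderOf_eq_one _]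
  exact MulChar.one_apply_coe _

theorem sieve_exists {α : Type*} (X : Finset α) (K ps ls : Finset ℕ)
    (hKp : Disjoint K ps) (hr : ∀ r ∈ K ∪ ps ∪ ls, r.Prime)
    (I : ℕ → α → ℝ) (hI : ∀ r x, I r x = 0 ∨ I r x = 1) (H : ℝ)
    (hB : ∀ B : Finset ℕ, B ⊆ K ∪ ps ∪ ls → B.Nonempty →
      |∑ x ∈ X, ∏ r ∈ B, (I r x / (1 - 1 / (r : ℝ)) - 1)| ≤ H)
    (θ δ ε : ℝ) (hθ : θ = ∏ r ∈ K, (1 - 1 / (r : ℝ)))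
    (hδ : δ = 1 - ∑ p ∈ ps, (1 : ℝ) / p) (hε : ε = ∑ l ∈ ls, (1 : ℝ) / l) (hδ0 : 0 ≤ δ)
    (hpos : 0 < (θ * δ - ε) * X.card - H * (θ * (ps.card - 1 + 2 * δ) * 2 ^ K.card
      + (ls.card - ε)) + H * θ * δ) :
    ∃ x ∈ X, ∀ r ∈ K ∪ ps ∪ ls, I r x = 1 := by
  classical
  set t : ℕ → ℝ := fun r => 1 - 1 / (r : ℝ) with ht
  have htpos : ∀ r ∈ K ∪ ps ∪ ls, 0 < t r := by
    intro r h
    have h2 : (2 : ℝ) ≤ r := by exact_mod_cast (hr r h).two_le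
    have : 1 / (r : ℝ) ≤ 1 / 2 := one_div_le_one_div_of_le (by norm_num) h2
    simp only [ht]; linarith
  set J : ℕ → α → ℝ := fun r x => I r x / t r - 1 with hJ
  have hB' : ∀ B : Finset ℕ, B ⊆ K ∪ ps ∪ ls → B.Nonempty → |∑ x ∈ X, ∏ r ∈ B, J r x| ≤ H := hB
  have hIJ : ∀ r ∈ K ∪ ps ∪ ls, ∀ x, I r x = t r * (1 + J r x) := by
    intro r h x
    have := (htpos r h).ne'
    simp only [hJ]; field_simp; ring
  have hKs : K ⊆ K ∪ ps ∪ ls := fun r h => by simp [h]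
  have hpss : ps ⊆ K ∪ ps ∪ ls := fun r h => by simp [h]
  have hlss : ls ⊆ K ∪ ps ∪ ls := fun r h => by simp [h]
  -- product over K
  have hIK : ∀ x, ∏ r ∈ K, I r x = θ * ∑ B ∈ K.powerset, ∏ r ∈ B, J r x := by
    intro x
    rw [Finset.prod_congr rfl fun r h => hIJ r (hKs h) x, Finset.prod_mul_distrib, hθ,
      Finset.prod_one_add]
  set N : ℝ := (X.card : ℝ) with hN
  set RK : ℝ := ∑ B ∈ K.powerset.erase ∅, ∑ x ∈ X, ∏ r ∈ B, J r x with hRK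
  have hsumK : ∑ x ∈ X, ∏ r ∈ K, I r x = θ * (N + RK) := by
    simp_rw [hIK]
    rw [← Finset.mul_sum, Finset.sum_comm,
      ← Finset.add_sum_erase _ _ (Finset.empty_mem_powerset K)]
    simp [hN, hRK]
  have hRKb : |RK| ≤ (2 ^ K.card - 1) * H := by
    have : |RK| ≤ ∑ B ∈ K.powerset.erase ∅, H := by
      refine (Finset.abs_sum_le_sum_abs _ _).trans (Finset.sum_le_sum fun B hb => ?_)
      rw [Finset.mem_erase, Finset.mem_powerset] at hb
      exact hB' B (hb.2.trans hKs) (Finset.nonempty_iff_ne_empty.mpr hb.1)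
    refine this.trans (le_of_eq ?_)
    rw [Finset.sum_const, nsmul_eq_mul, Finset.card_erase_of_mem (Finset.empty_mem_powerset K),
      Finset.card_powerset, Nat.cast_sub Nat.one_le_two_pow]
    push_cast; ring
  set RP : ℕ → ℝ := fun p => ∑ B ∈ K.powerset, ∑ x ∈ X, (∏ r ∈ insert p B, J r x) with hRP
  have hsumP : ∀ p ∈ ps, ∑ x ∈ X, (∏ r ∈ K, I r x) * I p x = θ * t p * (N + RK + RP p) := by
    intro p hp
    have hpK : p ∉ K := fun h => (Finset.disjoint_left.mp hKp) h hp
    have h1 : ∀ x, (∏ r ∈ K, I r x) * I p x =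
        t p * (∏ r ∈ K, I r x) + θ * t p * ∑ B ∈ K.powerset, ∏ r ∈ insert p B, J r x := by
      intro x
      have h2 : ∑ B ∈ K.powerset, ∏ r ∈ insert p B, J r x =
          J p x * ∑ B ∈ K.powerset, ∏ r ∈ B, J r x := by
        rw [Finset.mul_sum]
        refine Finset.sum_congr rfl fun B hb => ?_
        rw [Finset.prod_insert fun h => hpK (Finset.mem_powerset.mp hb h)]
      rw [h2, hIJ p (hpss hp) x, hIK]; ring
    simp_rw [h1]
    rw [Finset.sum_add_distrib, ← Finset.mul_sum, hsumK, ← Finset.mul_sum, Finset.sum_comm]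
    simp only [hRP]; ring
  have hRPb : ∀ p ∈ ps, |RP p| ≤ 2 ^ K.card * H := by
    intro p hp
    have : |RP p| ≤ ∑ B ∈ K.powerset, H := by
      refine (Finset.abs_sum_le_sum_abs _ _).trans (Finset.sum_le_sum fun B hb => ?_)
      refine hB' _ ?_ (Finset.insert_nonempty _ _)
      exact Finset.insert_subset (hpss hp) ((Finset.mem_powerset.mp hb).trans hKs)
    refine this.trans (le_of_eq ?_)
    rw [Finset.sum_const, nsmul_eq_mul, Finset.card_powerset]
    push_cast; ring
  have hsumL : ∀ l ∈ ls, ∑ x ∈ X, (1 - I l x) ≤ 1 / (l : ℝ) * N + t l * H := by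
    intro l hl
    have h1 : ∑ x ∈ X, (1 - I l x) = 1 / (l : ℝ) * N - t l * ∑ x ∈ X, J l x := by
      simp_rw [hIJ l (hlss hl)]
      rw [Finset.sum_sub_distrib, ← Finset.mul_sum, Finset.sum_add_distrib]
      simp only [Finset.sum_const, nsmul_eq_mul, mul_one, ← hN]
      simp only [ht]; ring
    have h2 := hB' {l} (by simpa using hlss hl) (by simp)
    simp only [Finset.prod_singleton] at h2
    have h3 := (abs_le.mp h2).1
    have h4 := htpos l (hlss hl)
    rw [h1]; nlinarith
  have hstp : ∑ p ∈ ps, t p = ps.card - 1 + δ := by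
    simp only [ht, Finset.sum_sub_distrib, hδ]; simp
  have hstl : ∑ p ∈ ls, t p = ls.card - ε := by
    simp only [ht, Finset.sum_sub_distrib, hε]; simp
  have hθ0 : 0 ≤ θ := by
    rw [hθ]; exact Finset.prod_nonneg fun r h => (htpos r (hKs h)).le
  have htotal : 0 < ∑ x ∈ X, ((∏ r ∈ K, I r x) * (∑ p ∈ ps, I p x - (ps.card - 1)) -
      ∑ l ∈ ls, (1 - I l x)) := by
    have e1 : ∑ x ∈ X, ((∏ r ∈ K, I r x) * (∑ p ∈ ps, I p x - (ps.card - 1)) -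
      ∑ l ∈ ls, (1 - I l x)) = ∑ p ∈ ps, (θ * t p * (N + RK + RP p)) -
        (ps.card - 1) * (θ * (N + RK)) - ∑ l ∈ ls, ∑ x ∈ X, (1 - I l x) := by
      rw [← hsumK, ← Finset.sum_congr rfl hsumP, Finset.sum_comm, Finset.sum_comm (s := ls),
        Finset.mul_sum, ← Finset.sum_sub_distrib, ← Finset.sum_sub_distrib]
      refine Finset.sum_congr rfl fun x _ => ?_
      rw [← Finset.mul_sum]; ring
    have e2 : ∑ p ∈ ps, (θ * t p * (N + RK + RP p)) =
        θ * (ps.card - 1 + δ) * (N + RK) + θ * ∑ p ∈ ps, t p * RP p := by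
      rw [← hstp, Finset.mul_sum, Finset.mul_sum, Finset.sum_mul, ← Finset.sum_add_distrib]
      exact Finset.sum_congr rfl fun p _ => by ring
    have e3 : -((ps.card - 1 + δ) * (2 ^ K.card * H)) ≤ ∑ p ∈ ps, t p * RP p := by
      rw [← hstp, Finset.sum_mul, ← Finset.sum_neg_distrib]
      refine Finset.sum_le_sum fun p hp => ?_
      have := (abs_le.mp (hRPb p hp)).1
      nlinarith [htpos p (hpss hp)]
    have e4 : ∑ l ∈ ls, ∑ x ∈ X, (1 - I l x) ≤ ε * N + (ls.card - ε) * H := by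
      refine (Finset.sum_le_sum hsumL).trans (le_of_eq ?_)
      rw [Finset.sum_add_distrib, ← Finset.sum_mul, ← Finset.sum_mul, hstl, hε]
    have e5 := mul_le_mul_of_nonneg_left e3 hθ0
    have e6 := mul_le_mul_of_nonneg_left (abs_le.mp hRKb).1 (mul_nonneg hθ0 hδ0)
    rw [e1, e2]
    refine hpos.trans_le ?_
    linarith
  obtain ⟨x, hx, hx0⟩ : ∃ x ∈ X, 0 < ((∏ r ∈ K, I r x) * (∑ p ∈ ps, I p x - (ps.card - 1)) -
      ∑ l ∈ ls, (1 - I l x)) := by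
    by_contra hcon
    push Not at hcon
    exact absurd htotal (not_lt.mpr (Finset.sum_nonpos hcon))
  refine ⟨x, hx, ?_⟩
  have hle : ∀ r, I r x ≤ 1 := fun r => by rcases hI r x with h | h <;> rw [h]; norm_num
  have hge : ∀ r, 0 ≤ I r x := fun r => by rcases hI r x with h | h <;> rw [h]; norm_num
  have hLn : 0 ≤ ∑ l ∈ ls, (1 - I l x) := Finset.sum_nonneg fun l _ => by linarith [hle l]
  have hPk1 : ∏ r ∈ K, I r x ≤ 1 := Finset.prod_le_one (fun r _ => hge r) fun r _ => hle r
  have hPk0 : 0 ≤ ∏ r ∈ K, I r x := Finset.prod_nonneg fun r _ => hge r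
  have hS1 : ∑ p ∈ ps, I p x ≤ ps.card := by
    refine (Finset.sum_le_sum fun p _ => hle p).trans (by simp)
  intro r hrm
  by_contra hne
  have h0 : I r x = 0 := (hI r x).resolve_right hne
  rw [Finset.mem_union, Finset.mem_union] at hrm
  rcases hrm with (h | h) | h
  · rw [Finset.prod_eq_zero (f := fun r => I r x) h h0] at hx0
    linarith
  · have : ∑ p ∈ ps, I p x ≤ ps.card - 1 := by
      rw [← Finset.add_sum_erase _ _ h, h0, zero_add]
      refine (Finset.sum_le_sum fun p _ => hle p).trans ?_
      rw [Finset.sum_const, nsmul_eq_mul, Finset.card_erase_of_mem h, mul_one,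
        Nat.cast_sub (Finset.card_pos.mpr ⟨r, h⟩)]
      simp
    nlinarith
  · have h1 : 1 ≤ ∑ l ∈ ls, (1 - I l x) := by
      have := Finset.single_le_sum (f := fun l => 1 - I l x)
        (fun l _ => by linarith [hle l]) h
      simpa [h0] using this
    nlinarith

/-- The modified prime sieve (Theorem 3.5): write the radical of `q^n - 1` as
`k·P·L` with `k, P, L` pairwise coprime, `P = p_1 ⋯ p_s` a product of `s` distinct
primes (the sieving primes) and `L = l_1 ⋯ l_t` a product of `t` distinct primes
(the large primes). Put `δ = 1 - ∑ 1/pᵢ`, `ε = ∑ 1/lᵢ` and `θ(k) = φ(k)/k`. If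
`θ(k)·δ > ε` and `q^(n/2-2) > 4(θ(k)(s-1+2δ)2^(ω(k)) + (t-ε))/(θ(k)δ - ε)`, then
every pair of traces is achieved by some `ξ` with `ξ + ξ⁻¹` primitive. -/
theorem stmt7 (q n : ℕ) (hq : IsPrimePow q) (hn : 0 < n)
    (k : ℕ) (ps ls : Finset ℕ)
    (hps : ∀ p ∈ ps, p.Prime) (hls : ∀ l ∈ ls, l.Prime)
    (hrad : (q ^ n - 1).primeFactors.prod id = k * (∏ p ∈ ps, p) * (∏ l ∈ ls, l))
    (hkP : Nat.Coprime k (∏ p ∈ ps, p))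
    (hkL : Nat.Coprime k (∏ l ∈ ls, l))
    (hPL : Nat.Coprime (∏ p ∈ ps, p) (∏ l ∈ ls, l))
    (δ ε : ℝ) (hδdef : δ = 1 - ∑ p ∈ ps, (1 : ℝ) / p)
    (hεdef : ε = ∑ l ∈ ls, (1 : ℝ) / l)
    (hθδε : (k.totient : ℝ) / k * δ > ε)
    (hcond : (q : ℝ) ^ ((n : ℝ) / 2 - 2) >
      4 * ((k.totient : ℝ) / k * ((ps.card : ℝ) - 1 + 2 * δ) * 2 ^ k.primeFactors.card +
        ((ls.card : ℝ) - ε)) / ((k.totient : ℝ) / k * δ - ε))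
    (F E : Type*) [Field F] [Fintype F] [Field E] [Fintype E] [Algebra F E]
    (hF : Fintype.card F = q) (hE : Fintype.card E = q ^ n) (a b : F) :
    ∃ ξ : E, ξ ≠ 0 ∧ Algebra.trace F E ξ = a ∧ Algebra.trace F E ξ⁻¹ = b ∧
      orderOf (ξ + ξ⁻¹) = q ^ n - 1 := by
  classical
  have hq1 : 1 < q := hq.one_lt
  have hQ1 : 1 < q ^ n := Nat.one_lt_pow hn.ne' hq1
  set D := Fintype.card E - 1 with hD
  have hDq : q ^ n - 1 = D := by rw [hD, hE]
  rw [hDq] at hrad ⊢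
  have hD0 : 0 < D := by omega
  -- prime factor decomposition
  have hrad0 : D.primeFactors.prod id ≠ 0 :=
    Finset.prod_ne_zero_iff.mpr fun p hp => (Nat.prime_of_mem_primeFactors hp).ne_zero
  have hP0 : ∏ p ∈ ps, p ≠ 0 := Finset.prod_ne_zero_iff.mpr fun p hp => (hps p hp).ne_zero
  have hL0 : ∏ p ∈ ls, p ≠ 0 := Finset.prod_ne_zero_iff.mpr fun p hp => (hls p hp).ne_zero
  have hk0 : k ≠ 0 := by
    rintro rfl
    rw [zero_mul, zero_mul] at hrad
    exact hrad0 hrad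
  have hpf : D.primeFactors = k.primeFactors ∪ ps ∪ ls := by
    have h1 : (D.primeFactors.prod id).primeFactors = D.primeFactors :=
      Nat.primeFactors_prod_primeFactors D
    rw [← h1, hrad, Nat.primeFactors_mul (mul_ne_zero hk0 hP0) hL0, Nat.primeFactors_mul hk0 hP0,
      Nat.primeFactors_prod hps, Nat.primeFactors_prod hls]
  have hdisj : Disjoint k.primeFactors ps := by
    have := hkP.disjoint_primeFactors
    rwa [Nat.primeFactors_prod hps] at this
  have hk0' : (k : ℝ) ≠ 0 := by exact_mod_cast hk0
  have hθ : (k.totient : ℝ) / k = ∏ r ∈ k.primeFactors, (1 - 1 / (r : ℝ)) := by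
    have h1 := congrArg (fun z : ℚ => (z : ℝ)) (Nat.totient_eq_mul_prod_factors k)
    push_cast at h1
    rw [div_eq_iff hk0', h1, mul_comm]
    simp [one_div]
  set θ : ℝ := (k.totient : ℝ) / k with hθdef
  have hθ0 : 0 ≤ θ := by positivity
  have hε0 : 0 ≤ ε := by rw [hεdef]; positivity
  have hδ0 : 0 ≤ δ := by
    by_contra hcon
    push Not at hcon
    nlinarith
  have hex : ∀ r, ∃ χ : MulChar E ℂ, r ∈ D.primeFactors → orderOf χ = r := by
    intro r
    by_cases h : r ∈ D.primeFactors
    · obtain ⟨χ, hχ⟩ := exists_chi E r (Nat.prime_of_mem_primeFactors h)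
        (Nat.dvd_of_mem_primeFactors h)
      exact ⟨χ, fun _ => hχ⟩
    · exact ⟨1, fun h' => absurd h' h⟩
  choose c hc using hex
  set H : ℝ := 4 * Real.sqrt (Fintype.card E) with hH
  have hXne : ∀ ξ ∈ XX F E a b, ξ + ξ⁻¹ ≠ 0 ∧ Algebra.trace F E ξ = a ∧
      Algebra.trace F E ξ⁻¹ = b := by
    intro ξ hξ
    unfold XX at hξ
    exact (Finset.mem_filter.mp hξ).2
  obtain ⟨ξ, hξ, hall⟩ := sieve_exists (XX F E a b) k.primeFactors ps ls hdisj
    (by rw [← hpf]; exact fun r hr => Nat.prime_of_mem_primeFactors hr)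
    (fun r ξ => if c r (ξ + ξ⁻¹) = 1 then (0 : ℝ) else 1)
    (by intro r x; split_ifs <;> simp) H
    (by
      intro B hB hne
      rw [← hpf] at hB
      have h1 := char_prod_bound F E a b c B (fun r hr => Nat.prime_of_mem_primeFactors (hB hr))
        (fun r hr => hc r (hB hr)) 1
        (fun r hr => by
          rw [orderOf_one]
          exact (Nat.prime_of_mem_primeFactors (hB hr)).not_dvd_one) (Or.inr hne)
      rw [← Real.norm_eq_abs, ← Complex.norm_real]
      refine le_of_eq_of_le ?_ h1
      rw [Complex.ofReal_sum]
      congr 1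
      refine Finset.sum_congr rfl fun ξ hξ => ?_
      have hne := (hXne ξ hξ).1
      rw [MulChar.one_apply (isUnit_iff_ne_zero.mpr hne), one_mul, Complex.ofReal_prod]
      refine Finset.prod_congr rfl fun r hr => ?_
      exact ind_char E r (Nat.prime_of_mem_primeFactors (hB hr)) (c r) (hc r (hB hr)) _ hne)
    θ δ ε hθ hδdef hεdef hδ0
    (by
      have hN := XX_card F E a b
      rw [← hH, hF] at hN
      have hq0 : (0 : ℝ) < q := by exact_mod_cast (by omega : 0 < q)
      have hDp : 0 < θ * δ - ε := by linarith
      have hsq : Real.sqrt (Fintype.card E) = (q : ℝ) ^ ((n : ℝ) / 2) := by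
        rw [hE, Nat.cast_pow, Real.sqrt_eq_rpow, ← Real.rpow_natCast, ← Real.rpow_mul hq0.le]
        congr 1; ring
      have hsqpos : 0 < Real.sqrt (Fintype.card E) := by rw [hsq]; positivity
      have hQq : (Fintype.card E : ℝ) / (q : ℝ) ^ 2 =
          Real.sqrt (Fintype.card E) * (q : ℝ) ^ ((n : ℝ) / 2 - 2) := by
        rw [Real.rpow_sub hq0, ← hsq, Real.rpow_ofNat, ← mul_div_assoc,
          Real.mul_self_sqrt (Nat.cast_nonneg _)]
      rw [gt_iff_lt, div_lt_iff₀ hDp] at hcond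
      have h2 := mul_lt_mul_of_pos_left hcond hsqpos
      have hN2 := mul_le_mul_of_nonneg_left hN hDp.le
      rw [hQq] at hN2
      have hH0 : 0 < H := by rw [hH]; positivity
      have h3 : 0 ≤ H * ε := mul_nonneg hH0.le hε0
      have h4 : H * (θ * (ps.card - 1 + 2 * δ) * 2 ^ k.primeFactors.card + (ls.card - ε)) <
          (θ * δ - ε) * (Real.sqrt (Fintype.card E) * (q : ℝ) ^ ((n : ℝ) / 2 - 2)) := by
        rw [hH]; linarith
      linarith)
  obtain ⟨h1, h2, h3⟩ := hXne ξ hξ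
  refine ⟨ξ, ?_, h2, h3, ?_⟩
  · rintro rfl
    simp at h1
  · refine prim_of_char E c hc _ h1 fun r hr hcon => ?_
    rw [← hD, hpf] at hr
    have := hall r hr
    simp [hcon] at this
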